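/- Let V be an n-dimensional vector space over the finite field 𝔽_q with n ≥ 2t+1 and t ≥ 2, and let F be a cover-free family of 2t-dimensional subspaces of V with |F| = [n-1 choose t]_q / [2t-1 choose t]_q. Let Ω be the set of t-dimensional subspaces A of V with |F_A| = 1. Then |△(Ω)| ≥ q^{t-1} [n-1 choose t-1]_q; moreover, if equality holds, then for every F ∈ F there exists a 1-dimensional subspace E of F such that N_t(F) = {H : H a t-dimensional subspace of F with E ≤ H}. -/

import Mathlib

/-- A family of subspaces is cover-free if there are no three distinct members
`F₀, F₁, F₂` with `F₀ ≤ (F₀ ⊓ F₁) ⊔ (F₀ ⊓ F₂)`. -/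
def IsCoverFree {K V : Type*} [Field K] [AddCommGroup V] [Module K V]
    (F : Set (Submodule K V)) : Prop :=
  ¬ ∃ F₀ F₁ F₂ : Submodule K V, F₀ ∈ F ∧ F₁ ∈ F ∧ F₂ ∈ F ∧
    F₀ ≠ F₁ ∧ F₀ ≠ F₂ ∧ F₁ ≠ F₂ ∧ F₀ ≤ (F₀ ⊓ F₁) ⊔ (F₀ ⊓ F₂)

/-- The Gaussian binomial coefficient `[m choose k]_q` as a rational number. -/
def GaussQ (q m k : ℕ) : ℚ :=
  ∏ i ∈ Finset.range k, ((q : ℚ) ^ (m - i) - 1) / ((q : ℚ) ^ (k - i) - 1)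

/-- `Ω`: the `t`-dimensional subspaces of `V` lying in exactly one member of the family. -/
def OmegaSet {K V : Type*} [Field K] [AddCommGroup V] [Module K V]
    (F : Set (Submodule K V)) (t : ℕ) : Set (Submodule K V) :=
  {A | Module.finrank K A = t ∧ {G ∈ F | A ≤ G}.ncard = 1}

/-- The shadow `△(Ω)` of the family `Ω` of `t`-dimensional subspaces: all
`(t-1)`-dimensional subspaces contained in some member of `Ω`. -/
def ShadowSet {K V : Type*} [Field K] [AddCommGroup V] [Module K V]
    (t : ℕ) (H : Set (Submodule K V)) : Set (Submodule K V) :=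
  {G | Module.finrank K G = t - 1 ∧ ∃ A ∈ H, G ≤ A}

namespace Stmt19

open Classical in
noncomputable instance fintypeSubmodule {K V : Type*} [Field K] [AddCommGroup V] [Module K V]
    [Finite V] : Fintype (Submodule K V) := Fintype.ofFinite _

/-- `1 + q + ... + q^(m-1)`. -/
def PQ (q m : ℕ) : ℚ := ∑ i ∈ Finset.range m, (q : ℚ) ^ i

lemma PQ_zero (q : ℕ) : PQ q 0 = 0 := by simp [PQ]

lemma PQ_one (q : ℕ) : PQ q 1 = 1 := by simp [PQ]

lemma PQ_succ (q m : ℕ) : PQ q (m + 1) = PQ q m + (q : ℚ) ^ m := by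
  simp [PQ, Finset.sum_range_succ]

lemma PQ_succ' (q m : ℕ) : PQ q (m + 1) = 1 + q * PQ q m := by
  induction m with
  | zero => simp [PQ_zero, PQ_one]
  | succ m ih =>
    have h := PQ_succ q m
    rw [PQ_succ q (m + 1)]
    linear_combination ih - q * h

lemma PQ_mul (q m : ℕ) : PQ q m * ((q : ℚ) - 1) = (q : ℚ) ^ m - 1 := by
  unfold PQ; exact geom_sum_mul _ _

lemma PQ_nonneg (q m : ℕ) : 0 ≤ PQ q m := by
  unfold PQ; positivity

lemma PQ_pos {q : ℕ} (hq : 2 ≤ q) {m : ℕ} (hm : 1 ≤ m) : 0 < PQ q m := by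
  obtain ⟨k, rfl⟩ := Nat.exists_eq_add_of_le' hm
  rw [PQ_succ]
  have := PQ_nonneg q k
  have : (0 : ℚ) < (q : ℚ) ^ k := by positivity
  linarith

lemma PQ_lt {q : ℕ} (hq : 2 ≤ q) {m k : ℕ} (h : m < k) : PQ q m < PQ q k := by
  have : StrictMono (PQ q) := strictMono_nat_of_lt_succ (fun m => by
    rw [PQ_succ]
    have : (0 : ℚ) < (q : ℚ) ^ m := by positivity
    linarith)
  exact this h

lemma PQ_le {q : ℕ} (hq : 2 ≤ q) {m k : ℕ} (h : m ≤ k) : PQ q m ≤ PQ q k := by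
  rcases h.eq_or_lt with rfl | h
  · exact le_rfl
  · exact (PQ_lt hq h).le

section count
variable {K V : Type*} [Field K] [Fintype K] [AddCommGroup V] [Module K V] [Fintype V]

lemma two_le_card : 2 ≤ Fintype.card K := Fintype.one_lt_card

open Classical in
lemma card_sub (A : Submodule K V) :
    (Finset.univ.filter (fun v : V => v ∈ A)).card = Fintype.card K ^ Module.finrank K A := by
  rw [← Module.card_eq_pow_finrank (K := K) (V := A)]
  exact (Fintype.card_subtype _).symm

open Classical in
lemma card_sdiff {A B : Submodule K V} (h : A ≤ B) :
    ((Finset.univ.filter (fun v : V => v ∈ B ∧ v ∉ A)).card : ℚ) =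
      (Fintype.card K : ℚ) ^ Module.finrank K B - (Fintype.card K : ℚ) ^ Module.finrank K A := by
  have h1 : (Finset.univ.filter (fun v : V => v ∈ B ∧ v ∉ A)).card +
      (Finset.univ.filter (fun v : V => v ∈ A)).card
      = (Finset.univ.filter (fun v : V => v ∈ B)).card := by
    rw [← Finset.card_union_of_disjoint]
    · congr 1
      ext v
      simp only [Finset.mem_union, Finset.mem_filter, Finset.mem_univ, true_and]
      constructor
      · rintro (h2 | h2)
        · exact h2.1
        · exact h h2
      · intro h2
        by_cases h3 : v ∈ A
        · exact Or.inr h3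
        · exact Or.inl ⟨h2, h3⟩
    · rw [Finset.disjoint_filter]
      intro v _ h2 h3
      exact h2.2 h3
  rw [card_sub, card_sub] at h1
  have : ((Finset.univ.filter (fun v : V => v ∈ B ∧ v ∉ A)).card : ℚ) +
    (Fintype.card K : ℚ) ^ Module.finrank K A = (Fintype.card K : ℚ) ^ Module.finrank K B := by
    exact_mod_cast h1
  linarith

lemma finrank_sup_span {A : Submodule K V} {v : V} (hv : v ∉ A) :
    Module.finrank K (A ⊔ Submodule.span K {v} : Submodule K V) = Module.finrank K A + 1 := by
  have h := Submodule.finrank_sup_add_finrank_inf_eq A (Submodule.span K {v})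
  have h0 : v ≠ 0 := by rintro rfl; exact hv A.zero_mem
  have h1 : A ⊓ Submodule.span K {v} = ⊥ := by
    rw [← disjoint_iff, Submodule.disjoint_span_singleton' h0]
    exact hv
  rw [h1, finrank_bot, finrank_span_singleton h0] at h
  omega

open Classical in
lemma count_up {A B : Submodule K V} (h : A ≤ B) :
    ((Finset.univ.filter (fun C : Submodule K V => A ≤ C ∧ C ≤ B ∧
      Module.finrank K C = Module.finrank K A + 1)).card : ℚ) =
      PQ (Fintype.card K) (Module.finrank K B - Module.finrank K A) := by
  set q := Fintype.card K with hq
  have hq2 : 2 ≤ q := two_le_card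
  have key := Finset.card_eq_sum_card_fiberwise
    (f := fun v : V => A ⊔ Submodule.span K {v})
    (s := Finset.univ.filter (fun v : V => v ∈ B ∧ v ∉ A))
    (t := Finset.univ.filter (fun C : Submodule K V => A ≤ C ∧ C ≤ B ∧
      Module.finrank K C = Module.finrank K A + 1)) (by
      intro v hv
      simp only [Finset.coe_filter, Finset.mem_univ, true_and, Set.mem_ofPred_eq] at hv ⊢
      refine ⟨le_sup_left, sup_le h ?_, finrank_sup_span hv.2⟩
      rw [Submodule.span_singleton_le_iff_mem]; exact hv.1)
  have key2 : ((Finset.univ.filter (fun v : V => v ∈ B ∧ v ∉ A)).card : ℚ) =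
    ∑ C ∈ Finset.univ.filter (fun C : Submodule K V => A ≤ C ∧ C ≤ B ∧
      Module.finrank K C = Module.finrank K A + 1),
      ((q : ℚ) ^ (Module.finrank K A + 1) - (q : ℚ) ^ (Module.finrank K A)) := by
    rw [key]
    push_cast
    refine Finset.sum_congr rfl (fun C hC => ?_)
    simp only [Finset.mem_filter, Finset.mem_univ, true_and] at hC
    obtain ⟨h1, h2, h3⟩ := hC
    rw [← h3, ← card_sdiff h1]
    congr 2
    ext v
    simp only [Finset.mem_filter, Finset.mem_univ, true_and]
    constructor
    · rintro ⟨⟨h4, h5⟩, rfl⟩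
      exact ⟨Submodule.mem_sup_right (Submodule.mem_span_singleton_self v), h5⟩
    · rintro ⟨h4, h5⟩
      refine ⟨⟨h2 h4, h5⟩, ?_⟩
      apply Submodule.eq_of_le_of_finrank_eq
      · refine sup_le h1 ?_
        rw [Submodule.span_singleton_le_iff_mem]; exact h4
      · rw [finrank_sup_span h5, h3]
  rw [card_sdiff h, Finset.sum_const, nsmul_eq_mul] at key2
  have hle : Module.finrank K A ≤ Module.finrank K B := Submodule.finrank_mono h
  obtain ⟨d, hd⟩ := Nat.exists_eq_add_of_le hle
  rw [hd] at key2 ⊢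
  have hqa : (0 : ℚ) < (q : ℚ) ^ Module.finrank K A := by positivity
  have hq1 : (0 : ℚ) < (q : ℚ) - 1 := by
    have : (2 : ℚ) ≤ q := by exact_mod_cast hq2
    linarith
  rw [Nat.add_sub_cancel_left]
  have h5 := PQ_mul q d
  apply mul_right_cancel₀ (mul_pos hqa hq1).ne'
  have : (q : ℚ) ^ (Module.finrank K A + d) = (q : ℚ) ^ Module.finrank K A * q ^ d := pow_add _ _ _
  rw [← hq, this, pow_succ] at key2
  linear_combination (-1 : ℚ) * key2 - (q : ℚ) ^ Module.finrank K A * h5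

open Classical in
lemma count_down_top (A : Submodule K V) :
    ((Finset.univ.filter (fun C : Submodule K V => A ≤ C ∧
      Module.finrank K C + 1 = Module.finrank K V)).card : ℚ) =
      PQ (Fintype.card K) (Module.finrank K V - Module.finrank K A) := by
  haveI : Fintype (Module.Dual K V) := Module.fintypeOfFintype (Module.finBasis K (Module.Dual K V))
  have h := count_up (K := K) (V := Module.Dual K V) (A := ⊥) (B := A.dualAnnihilator) bot_le
  have hA := Subspace.finrank_add_finrank_dualAnnihilator_eq A
  rw [finrank_bot, Nat.sub_zero] at h
  have h2 : Module.finrank K A.dualAnnihilator = Module.finrank K V - Module.finrank K A := by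
    omega
  rw [← h2, ← h]
  norm_cast
  refine Finset.card_equiv
    ((Subspace.orderIsoFiniteDimensional (K := K) (V := V)).toEquiv.trans OrderDual.ofDual) ?_
  intro C
  have hC := Subspace.finrank_add_finrank_dualAnnihilator_eq C
  have e : ((Subspace.orderIsoFiniteDimensional (K := K) (V := V)).toEquiv.trans
    OrderDual.ofDual) C = C.dualAnnihilator := rfl
  rw [e]
  simp only [Finset.mem_filter, Finset.mem_univ, true_and, bot_le, zero_add,
    Subspace.dualAnnihilator_le_dualAnnihilator_iff]
  constructor
  · rintro ⟨h3, h4⟩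
    exact ⟨h3, by omega⟩
  · rintro ⟨h3, h4⟩
    exact ⟨h3, by omega⟩

open Classical in
lemma count_down {A B : Submodule K V} (hAB : A ≤ B) :
    ((Finset.univ.filter (fun C : Submodule K V => A ≤ C ∧ C ≤ B ∧
      Module.finrank K C + 1 = Module.finrank K B)).card : ℚ) =
      PQ (Fintype.card K) (Module.finrank K B - Module.finrank K A) := by
  have h := count_down_top (K := K) (V := B) (A.comap B.subtype)
  have h1 : Module.finrank K (A.comap B.subtype) = Module.finrank K A := by
    rw [← Submodule.finrank_map_subtype_eq B (A.comap B.subtype), Submodule.map_comap_subtype,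
      inf_eq_right.2 hAB]
  rw [h1] at h
  rw [← h]
  norm_cast
  symm
  refine Finset.card_bij (fun C _ => C.map B.subtype) ?_ ?_ ?_
  · intro C hC
    simp only [Finset.mem_filter, Finset.mem_univ, true_and] at hC ⊢
    refine ⟨?_, Submodule.map_subtype_le B C, ?_⟩
    · have := Submodule.map_mono (f := B.subtype) hC.1
      rwa [Submodule.map_comap_subtype, inf_eq_right.2 hAB] at this
    · rw [Submodule.finrank_map_subtype_eq]; exact hC.2
  · intro C _ D _ hCD
    exact Submodule.map_injective_of_injective B.injective_subtype hCD
  · intro C hC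
    simp only [Finset.mem_filter, Finset.mem_univ, true_and] at hC
    refine ⟨C.comap B.subtype, ?_, ?_⟩
    · simp only [Finset.mem_filter, Finset.mem_univ, true_and]
      refine ⟨Submodule.comap_mono hC.1, ?_⟩
      rw [← Submodule.finrank_map_subtype_eq B (C.comap B.subtype), Submodule.map_comap_subtype,
        inf_eq_right.2 hC.2.1]
      exact hC.2.2
    · rw [Submodule.map_comap_subtype, inf_eq_right.2 hC.2.1]

end count

end Stmt19

namespace Stmt19

section spread
variable {K W : Type*} [Field K] [Fintype K] [AddCommGroup W] [Module K W] [Fintype W]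

open Classical in
lemma exists_spread {t : ℕ} (ht : 1 ≤ t) (hW : Module.finrank K W = 2 * t) :
    ∃ S : Finset (Submodule K W), (∀ s ∈ S, Module.finrank K s = t) ∧
      S.card = Fintype.card K ^ t + 1 ∧ ∀ s ∈ S, ∀ s' ∈ S, s ≠ s' → s ⊓ s' = ⊥ := by
  obtain ⟨p, hp⟩ := CharP.exists K
  haveI : Fact p.Prime := ⟨CharP.char_is_prime K p⟩
  haveI : NeZero t := ⟨by omega⟩
  obtain ⟨L, iL, iA, iF, hL⟩ : ∃ (L : Type) (_ : Field L) (_ : Algebra K L) (_ : Fintype L),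
      Module.finrank K L = t :=
    ⟨FiniteField.Extension K p t, inferInstance, inferInstance,
      haveI := Module.finite_of_finite K (M := FiniteField.Extension K p t); Fintype.ofFinite _,
      FiniteField.finrank_extension K p t⟩
  haveI : Module.Finite K L := Module.Finite.of_finite
  have φ : (L × L) ≃ₗ[K] W := LinearEquiv.ofFinrankEq _ _ (by
    rw [Module.finrank_prod, hL, hW]; omega)
  let f : Option L → ((L →ₗ[K] (L × L))) := fun o => match o with
    | none => LinearMap.inr K L L
    | some a => LinearMap.prod LinearMap.id (LinearMap.mulLeft K a)
  have hf : ∀ o, Function.Injective (f o) := by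
    intro o
    rcases o with _ | a
    · exact LinearMap.inr_injective
    · intro x y hxy
      simpa [f] using congrArg Prod.fst hxy
  have hff : ∀ o o' x y, o ≠ o' → f o x = f o' y → f o x = 0 := by
    intro o o' x y hne h
    rcases o with _ | a <;> rcases o' with _ | b
    · exact absurd rfl hne
    · have h1 := congrArg Prod.fst h
      have h2 := congrArg Prod.snd h
      simp [f] at h1 h2
      subst h1
      simp at h2
      simp [h2, f]
    · have h1 := congrArg Prod.fst h
      simp [f] at h1
      simp [h1, f]
    · have h1 := congrArg Prod.fst h
      have h2 := congrArg Prod.snd h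
      simp only [f, LinearMap.prod_apply, LinearMap.id_coe, id_eq, LinearMap.mulLeft_apply,
        Pi.prod] at h1 h2
      subst h1
      rcases mul_eq_mul_right_iff.1 h2 with h2 | h2
      · exact absurd (congrArg some h2) hne
      · simp [h2, f]
  let s : Option L → Submodule K W := fun o => LinearMap.range (φ.toLinearMap ∘ₗ f o)
  have hs : ∀ o, Module.finrank K (s o) = t := by
    intro o
    rw [← hL]
    exact LinearMap.finrank_range_of_inj (φ.injective.comp (hf o))
  have hdis : ∀ o o', o ≠ o' → s o ⊓ s o' = ⊥ := by
    intro o o' hne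
    rw [eq_bot_iff]
    rintro w ⟨⟨x, hx⟩, ⟨y, hy⟩⟩
    have h1 : f o x = f o' y := φ.injective (by
      have := hx.trans hy.symm
      simpa using this)
    have h2 := hff o o' x y hne h1
    rw [Submodule.mem_bot, ← hx]
    simp [h2]
  have hinj : Function.Injective s := by
    intro o o' h
    by_contra hne
    have h1 := hdis o o' hne
    rw [← h, inf_idem] at h1
    have h2 := hs o
    rw [h1, finrank_bot] at h2
    omega
  refine ⟨Finset.univ.image s, ?_, ?_, ?_⟩
  · intro x hx
    obtain ⟨o, -, rfl⟩ := Finset.mem_image.1 hx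
    exact hs o
  · rw [Finset.card_image_of_injective _ hinj, Finset.card_univ, Fintype.card_option,
      Module.card_eq_pow_finrank (K := K) (V := L), hL]
  · intro x hx y hy hne
    obtain ⟨o, -, rfl⟩ := Finset.mem_image.1 hx
    obtain ⟨o', -, rfl⟩ := Finset.mem_image.1 hy
    exact hdis o o' (fun h => hne (by rw [h]))

lemma exists_map_eq {T T' : Submodule K W} (h : Module.finrank K T = Module.finrank K T') :
    ∃ g : W ≃ₗ[K] W, T.map g.toLinearMap = T' := by
  obtain ⟨C, hC⟩ := T.exists_isCompl
  obtain ⟨C', hC'⟩ := T'.exists_isCompl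
  have h1 := Submodule.finrank_add_eq_of_isCompl hC
  have h2 := Submodule.finrank_add_eq_of_isCompl hC'
  have e1 : T ≃ₗ[K] T' := LinearEquiv.ofFinrankEq _ _ h
  have e2 : C ≃ₗ[K] C' := LinearEquiv.ofFinrankEq _ _ (by omega)
  let g : W ≃ₗ[K] W := (Submodule.prodEquivOfIsCompl T C hC).symm ≪≫ₗ (e1.prodCongr e2) ≪≫ₗ
    (Submodule.prodEquivOfIsCompl T' C' hC')
  refine ⟨g, ?_⟩
  apply Submodule.eq_of_le_of_finrank_eq
  · rintro _ ⟨x, hx, rfl⟩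
    have : (Submodule.prodEquivOfIsCompl T C hC).symm x = (⟨x, hx⟩, 0) :=
      Submodule.prodEquivOfIsCompl_symm_apply_left T C hC ⟨x, hx⟩
    simp [g, this]
  · rw [← h]; exact LinearEquiv.finrank_map_eq g T

open Classical in
lemma ekr {t : ℕ} (ht : 1 ≤ t) (hW : Module.finrank K W = 2 * t)
    (N : Finset (Submodule K W)) (hN : ∀ T ∈ N, Module.finrank K T = t)
    (hinter : ∀ T ∈ N, ∀ T' ∈ N, T ⊓ T' ≠ ⊥) :
    (Fintype.card K ^ t + 1) * N.card ≤
      (Finset.univ.filter (fun T : Submodule K W => Module.finrank K T = t)).card := by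
  obtain ⟨S, hS, hSc, hSd⟩ := exists_spread (K := K) (W := W) ht hW
  haveI : Finite (W ≃ₗ[K] W) := Finite.of_injective (fun g => (g : W → W)) DFunLike.coe_injective
  haveI : Fintype (W ≃ₗ[K] W) := Fintype.ofFinite _
  let k : Submodule K W → Submodule K W → ℕ := fun s T =>
    (Finset.univ.filter (fun g : W ≃ₗ[K] W => s.map g.toLinearMap = T)).card
  have hk : ∀ s s' T T' : Submodule K W, Module.finrank K s = t → Module.finrank K s' = t →
      Module.finrank K T = t → Module.finrank K T' = t → k s T ≤ k s' T' := by
    intro s s' T T' h1 h2 h3 h4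
    obtain ⟨a, ha⟩ := exists_map_eq (K := K) (h2.trans h1.symm)
    obtain ⟨b, hb⟩ := exists_map_eq (K := K) (h3.trans h4.symm)
    refine Finset.card_le_card_of_injOn (fun g => a ≪≫ₗ g ≪≫ₗ b) ?_ ?_
    · intro g hg
      simp only [Finset.coe_filter, Finset.mem_univ, true_and, Set.mem_ofPred_eq] at hg ⊢
      rw [LinearEquiv.coe_trans, LinearEquiv.coe_trans, Submodule.map_comp, Submodule.map_comp,
        ha, hg, hb]
    · intro g _ g' _ hgg
      ext x
      have := LinearEquiv.congr_fun hgg (a.symm x)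
      simpa using this
  have hSne : S.Nonempty := by
    rw [← Finset.card_pos]; omega
  obtain ⟨s0, hs0⟩ := hSne
  have hs0t := hS s0 hs0
  set X := Finset.univ.filter (fun T : Submodule K W => Module.finrank K T = t) with hX
  have hpos : 0 < k s0 s0 := by
    apply Finset.card_pos.2
    exact ⟨LinearEquiv.refl K W, by simp⟩
  have hG : Fintype.card (W ≃ₗ[K] W) = X.card * k s0 s0 := by
    rw [← Finset.card_univ, Finset.card_eq_sum_card_fiberwise
      (f := fun g : W ≃ₗ[K] W => s0.map g.toLinearMap) (t := X)]
    · rw [← smul_eq_mul, ← Finset.sum_const]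
      refine Finset.sum_congr rfl (fun T hT => ?_)
      have hT' : Module.finrank K T = t := by simpa [hX] using hT
      exact le_antisymm (hk s0 s0 T s0 hs0t hs0t hT' hs0t) (hk s0 s0 s0 T hs0t hs0t hs0t hT')
    · intro g _
      simp only [hX, Finset.coe_filter, Finset.mem_univ, true_and, Set.mem_ofPred_eq]
      rw [← hs0t]; exact LinearEquiv.finrank_map_eq g s0
  have hle : ∑ x ∈ S ×ˢ N, k x.1 x.2 ≤ Fintype.card (W ≃ₗ[K] W) := by
    have : ∑ x ∈ S ×ˢ N, k x.1 x.2 = ∑ g : W ≃ₗ[K] W,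
        ((S ×ˢ N).filter (fun x => x.1.map g.toLinearMap = x.2)).card := by
      simp only [k, Finset.card_filter]
      exact Finset.sum_comm
    rw [this, ← Finset.card_univ, Finset.card_eq_sum_ones]
    refine Finset.sum_le_sum (fun g _ => ?_)
    rw [Finset.card_le_one]
    rintro ⟨s, T⟩ h1 ⟨s', T'⟩ h2
    simp only [Finset.mem_filter, Finset.mem_product] at h1 h2
    obtain ⟨⟨h1, h3⟩, rfl⟩ := h1
    obtain ⟨⟨h2, h4⟩, rfl⟩ := h2
    have : s = s' := by
      by_contra hne
      apply hinter _ h3 _ h4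
      rw [← Submodule.map_inf _ g.injective, hSd s h1 s' h2 hne, Submodule.map_bot]
    rw [this]
  have hsum : ∑ x ∈ S ×ˢ N, k x.1 x.2 = S.card * N.card * k s0 s0 := by
    rw [← Finset.card_product, ← smul_eq_mul, ← Finset.sum_const]
    refine Finset.sum_congr rfl (fun x hx => ?_)
    obtain ⟨h1, h2⟩ := Finset.mem_product.1 hx
    have h1 := hS _ h1
    have h2 := hN _ h2
    exact le_antisymm (hk _ _ _ _ h1 hs0t h2 hs0t) (hk _ _ _ _ hs0t h1 hs0t h2)
  rw [hsum, hG, hSc] at hle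
  exact Nat.le_of_mul_le_mul_right hle hpos

end spread

end Stmt19

namespace Stmt19

section spectral
variable {K W : Type*} [Field K] [Fintype K] [AddCommGroup W] [Module K W] [Fintype W]

open Classical in
/-- The subspaces of dimension `i`. -/
noncomputable def Lv (K W : Type*) [Field K] [AddCommGroup W] [Module K W] [Fintype W] (i : ℕ) :
    Finset (Submodule K W) :=
  Finset.univ.filter (fun T : Submodule K W => Module.finrank K T = i)

lemma mem_Lv {i : ℕ} {T : Submodule K W} : T ∈ Lv K W i ↔ Module.finrank K T = i := by
  simp [Lv]

open Classical in
/-- Summing over subspaces of dimension `i` below. -/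
noncomputable def Up (i : ℕ) (f : Submodule K W → ℚ) (H : Submodule K W) : ℚ :=
  ∑ G ∈ Lv K W i, if G ≤ H then f G else 0

open Classical in
/-- Summing over subspaces of dimension `i` above. -/
noncomputable def Dn (i : ℕ) (f : Submodule K W → ℚ) (G : Submodule K W) : ℚ :=
  ∑ T ∈ Lv K W i, if G ≤ T then f T else 0

lemma adj (i j : ℕ) (f g : Submodule K W → ℚ) :
    ∑ H ∈ Lv K W j, Up i f H * g H = ∑ G ∈ Lv K W i, f G * Dn j g G := by
  simp only [Up, Dn, Finset.sum_mul, Finset.mul_sum]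
  rw [Finset.sum_comm]
  refine Finset.sum_congr rfl (fun G _ => Finset.sum_congr rfl (fun H _ => ?_))
  split_ifs <;> simp

open Classical in
lemma Up_one (i : ℕ) {H : Submodule K W} (hH : Module.finrank K H = i + 1) :
    Up i (fun _ => (1 : ℚ)) H = PQ (Fintype.card K) (i + 1) := by
  have h := count_down (K := K) (A := ⊥) (B := H) bot_le
  rw [finrank_bot, hH, Nat.sub_zero] at h
  rw [← h, Up, ← Finset.sum_filter, Finset.sum_const, nsmul_eq_mul, mul_one, Lv,
    Finset.filter_filter]
  congr 2
  ext C
  simp [and_comm]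

open Classical in
lemma Dn_one (i : ℕ) {G : Submodule K W} (hG : Module.finrank K G = i) :
    Dn (i + 1) (fun _ => (1 : ℚ)) G = PQ (Fintype.card K) (Module.finrank K W - i) := by
  have h := count_up (K := K) (A := G) (B := ⊤) le_top
  rw [finrank_top, hG] at h
  rw [← h, Dn, ← Finset.sum_filter, Finset.sum_const, nsmul_eq_mul, mul_one, Lv,
    Finset.filter_filter]
  congr 2
  ext C
  simp [and_comm]

lemma level_rec (i : ℕ) : ((Lv K W i).card : ℚ) * PQ (Fintype.card K) (Module.finrank K W - i) =
    (Lv K W (i + 1)).card * PQ (Fintype.card K) (i + 1) := by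
  have h := adj (K := K) (W := W) i (i + 1) (fun _ => 1) (fun _ => 1)
  simp only [mul_one, one_mul] at h
  rw [Finset.sum_congr rfl (fun H hH => Up_one i (mem_Lv.1 hH)),
    Finset.sum_congr rfl (fun H hH => Dn_one i (mem_Lv.1 hH))] at h
  simp only [Finset.sum_const, nsmul_eq_mul] at h
  exact h.symm

open Classical in
lemma comm_entry (j : ℕ) {A B : Submodule K W} (hA : Module.finrank K A = j + 1)
    (hB : Module.finrank K B = j + 1) :
    (((Lv K W (j + 2)).filter (fun H => A ≤ H ∧ B ≤ H)).card : ℚ) =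
      ((Lv K W j).filter (fun G => G ≤ A ∧ G ≤ B)).card +
      if A = B then PQ (Fintype.card K) (Module.finrank K W - (j + 1)) -
        PQ (Fintype.card K) (j + 1) else 0 := by
  by_cases hAB : A = B
  · subst hAB
    simp only [and_self, if_true]
    have h := count_up (K := K) (A := A) (B := ⊤) le_top
    rw [finrank_top, hA] at h
    have h' := count_down (K := K) (A := ⊥) (B := A) bot_le
    rw [finrank_bot, hA, Nat.sub_zero] at h'
    rw [← h, ← h', Lv, Finset.filter_filter, Lv, Finset.filter_filter]
    simp [and_comm]
  · rw [if_neg hAB, add_zero]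
    have hd := Submodule.finrank_sup_add_finrank_inf_eq A B
    have h1 : Module.finrank K (A ⊔ B : Submodule K W) ≠ j + 1 := by
      intro h
      have e1 : A = A ⊔ B := Submodule.eq_of_le_of_finrank_eq le_sup_left (by rw [h, hA])
      have e2 : B = A ⊔ B := Submodule.eq_of_le_of_finrank_eq le_sup_right (by rw [h, hB])
      exact hAB (e1.trans e2.symm)
    have h2 : j + 1 ≤ Module.finrank K (A ⊔ B : Submodule K W) := by
      rw [← hA]; exact Submodule.finrank_mono le_sup_left
    by_cases hs : Module.finrank K (A ⊔ B : Submodule K W) = j + 2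
    · have hi : Module.finrank K (A ⊓ B : Submodule K W) = j := by omega
      have e1 : (Lv K W (j + 2)).filter (fun H => A ≤ H ∧ B ≤ H) = {A ⊔ B} := by
        ext H
        simp only [Finset.mem_filter, mem_Lv, Finset.mem_singleton]
        constructor
        · rintro ⟨h3, h4, h5⟩
          exact (Submodule.eq_of_le_of_finrank_eq (sup_le h4 h5) (by rw [hs, h3])).symm
        · rintro rfl
          exact ⟨hs, le_sup_left, le_sup_right⟩
      have e2 : (Lv K W j).filter (fun G => G ≤ A ∧ G ≤ B) = {A ⊓ B} := by
        ext H
        simp only [Finset.mem_filter, mem_Lv, Finset.mem_singleton]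
        constructor
        · rintro ⟨h3, h4, h5⟩
          exact Submodule.eq_of_le_of_finrank_eq (le_inf h4 h5) (by rw [hi, h3])
        · rintro rfl
          exact ⟨hi, inf_le_left, inf_le_right⟩
      rw [e1, e2]; simp
    · have e1 : (Lv K W (j + 2)).filter (fun H => A ≤ H ∧ B ≤ H) = ∅ := by
        rw [Finset.filter_eq_empty_iff]
        rintro H hH ⟨h4, h5⟩
        have := Submodule.finrank_mono (sup_le h4 h5)
        rw [mem_Lv.1 hH] at this
        omega
      have e2 : (Lv K W j).filter (fun G => G ≤ A ∧ G ≤ B) = ∅ := by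
        rw [Finset.filter_eq_empty_iff]
        rintro H hH ⟨h4, h5⟩
        have := Submodule.finrank_mono (le_inf h4 h5)
        rw [mem_Lv.1 hH] at this
        omega
      rw [e1, e2]

open Classical in
lemma Up_sq (i j : ℕ) (f : Submodule K W → ℚ) :
    ∑ H ∈ Lv K W j, Up i f H ^ 2 = ∑ A ∈ Lv K W i, ∑ B ∈ Lv K W i,
      f A * f B * ((Lv K W j).filter (fun H => A ≤ H ∧ B ≤ H)).card := by
  simp only [Up, sq, Finset.sum_mul_sum]
  rw [Finset.sum_comm]
  refine Finset.sum_congr rfl (fun A _ => ?_)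
  rw [Finset.sum_comm]
  refine Finset.sum_congr rfl (fun B _ => ?_)
  rw [Finset.card_filter]
  push_cast
  rw [Finset.mul_sum]
  refine Finset.sum_congr rfl (fun H _ => ?_)
  by_cases h1 : A ≤ H <;> by_cases h2 : B ≤ H <;> simp [h1, h2]

open Classical in
lemma Dn_sq (i j : ℕ) (f : Submodule K W → ℚ) :
    ∑ G ∈ Lv K W j, Dn i f G ^ 2 = ∑ A ∈ Lv K W i, ∑ B ∈ Lv K W i,
      f A * f B * ((Lv K W j).filter (fun G => G ≤ A ∧ G ≤ B)).card := by
  simp only [Dn, sq, Finset.sum_mul_sum]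
  rw [Finset.sum_comm]
  refine Finset.sum_congr rfl (fun A _ => ?_)
  rw [Finset.sum_comm]
  refine Finset.sum_congr rfl (fun B _ => ?_)
  rw [Finset.card_filter]
  push_cast
  rw [Finset.mul_sum]
  refine Finset.sum_congr rfl (fun H _ => ?_)
  by_cases h1 : H ≤ A <;> by_cases h2 : H ≤ B <;> simp [h1, h2]

lemma comm_rel (j : ℕ) (f : Submodule K W → ℚ) :
    ∑ H ∈ Lv K W (j + 2), Up (j + 1) f H ^ 2 = ∑ G ∈ Lv K W j, Dn (j + 1) f G ^ 2 +
      (PQ (Fintype.card K) (Module.finrank K W - (j + 1)) - PQ (Fintype.card K) (j + 1)) *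
        ∑ A ∈ Lv K W (j + 1), f A ^ 2 := by
  classical
  rw [Up_sq, Dn_sq, Finset.mul_sum, ← Finset.sum_add_distrib]
  refine Finset.sum_congr rfl (fun A hA => ?_)
  have : ∀ B ∈ Lv K W (j + 1), f A * f B *
      (((Lv K W (j + 2)).filter (fun H => A ≤ H ∧ B ≤ H)).card : ℚ) =
      f A * f B * ((Lv K W j).filter (fun G => G ≤ A ∧ G ≤ B)).card +
      if A = B then (PQ (Fintype.card K) (Module.finrank K W - (j + 1)) -
        PQ (Fintype.card K) (j + 1)) * f A ^ 2 else 0 := by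
    intro B hB
    rw [comm_entry j (mem_Lv.1 hA) (mem_Lv.1 hB)]
    split_ifs with h
    · subst h; ring
    · ring
  rw [Finset.sum_congr rfl this, Finset.sum_add_distrib, Finset.sum_ite_eq, if_pos hA]

lemma Dn_of_Up {j : ℕ} {μ : ℚ} (hμ : 0 ≤ μ)
    (hU : ∀ f : Submodule K W → ℚ, ∑ G ∈ Lv K W j, f G = 0 →
      ∑ H ∈ Lv K W (j + 1), Up j f H ^ 2 ≤ μ * ∑ G ∈ Lv K W j, f G ^ 2)
    (f : Submodule K W → ℚ) (hf : ∑ T ∈ Lv K W (j + 1), f T = 0) :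
    ∑ G ∈ Lv K W j, Dn (j + 1) f G ^ 2 ≤ μ * ∑ T ∈ Lv K W (j + 1), f T ^ 2 := by
  have h0 : ∑ G ∈ Lv K W j, Dn (j + 1) f G = 0 := by
    have h := adj (K := K) (W := W) j (j + 1) (fun _ => 1) f
    simp only [one_mul] at h
    rw [← h, Finset.sum_congr rfl (fun H hH => by rw [Up_one j (mem_Lv.1 hH)]),
      ← Finset.mul_sum, hf, mul_zero]
  have h1 := hU _ h0
  have h2 := adj (K := K) (W := W) j (j + 1) (Dn (j + 1) f) f
  have h3 := Finset.sum_mul_sq_le_sq_mul_sq (Lv K W (j + 1)) (Up j (Dn (j + 1) f)) f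
  rw [h2] at h3
  simp only [← sq] at h3
  set g := ∑ G ∈ Lv K W j, Dn (j + 1) f G ^ 2 with hg
  set F2 := ∑ T ∈ Lv K W (j + 1), f T ^ 2 with hF
  have hg0 : 0 ≤ g := Finset.sum_nonneg (fun _ _ => sq_nonneg _)
  have hF0 : 0 ≤ F2 := Finset.sum_nonneg (fun _ _ => sq_nonneg _)
  rcases hg0.eq_or_lt with h | h
  · rw [← h]; positivity
  · have h4 : g ^ 2 ≤ μ * g * F2 := h3.trans (mul_le_mul_of_nonneg_right h1 hF0)
    have : g * g ≤ g * (μ * F2) := by nlinarith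
    exact le_of_mul_le_mul_left this h

lemma Up_bound (j : ℕ) (hj : j + 1 ≤ Module.finrank K W) (f : Submodule K W → ℚ)
    (hf : ∑ G ∈ Lv K W j, f G = 0) :
    ∑ H ∈ Lv K W (j + 1), Up j f H ^ 2 ≤
      (Fintype.card K * PQ (Fintype.card K) j * PQ (Fintype.card K) (Module.finrank K W - (j + 1)))
        * ∑ G ∈ Lv K W j, f G ^ 2 := by
  induction j generalizing f with
  | zero =>
    have hL : Lv K W 0 = {⊥} := by
      ext T; rw [mem_Lv, Finset.mem_singleton, Submodule.finrank_eq_zero]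
    rw [hL, Finset.sum_singleton] at hf
    simp [Up, hL, hf]
  | succ j ih =>
    rw [comm_rel]
    have h := Dn_of_Up (by
      have h1 := PQ_nonneg (Fintype.card K) j
      have h2 := PQ_nonneg (Fintype.card K) (Module.finrank K W - (j + 1))
      positivity) (ih (by omega)) f hf
    obtain ⟨d, hd⟩ : ∃ d, Module.finrank K W = j + 1 + 1 + d := Nat.exists_eq_add_of_le hj
    have e1 : Module.finrank K W - (j + 1) = d + 1 := by omega
    have e2 : Module.finrank K W - (j + 1 + 1) = d := by omega
    rw [e1] at h ⊢
    rw [e2]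
    refine (add_le_add_left h _).trans (le_of_eq ?_)
    rw [← add_mul]
    congr 1
    rw [PQ_succ' _ d, PQ_succ' _ j]
    have h5 := PQ_succ' (Fintype.card K) j
    have h6 := PQ_succ (Fintype.card K) j
    ring

lemma Dn_bound (j : ℕ) (hj : j + 1 ≤ Module.finrank K W) (f : Submodule K W → ℚ)
    (hf : ∑ T ∈ Lv K W (j + 1), f T = 0) :
    ∑ G ∈ Lv K W j, Dn (j + 1) f G ^ 2 ≤
      (Fintype.card K * PQ (Fintype.card K) j * PQ (Fintype.card K) (Module.finrank K W - (j + 1)))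
        * ∑ T ∈ Lv K W (j + 1), f T ^ 2 :=
  Dn_of_Up (by
      have h1 := PQ_nonneg (Fintype.card K) j
      have h2 := PQ_nonneg (Fintype.card K) (Module.finrank K W - (j + 1))
      positivity) (Up_bound j hj) f hf

end spectral

end Stmt19

namespace Stmt19

section star
variable {K W : Type*} [Field K] [Fintype K] [AddCommGroup W] [Module K W] [Fintype W]

lemma exists_hyper {A B : Submodule K W} (h : A < B) :
    ∃ C : Submodule K W, A ≤ C ∧ C ≤ B ∧ Module.finrank K C + 1 = Module.finrank K B := by
  classical
  have h1 := count_down (K := K) h.le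
  have h2 := Submodule.finrank_lt_finrank_of_lt h
  have h3 := PQ_pos (two_le_card (K := K))
    (show 1 ≤ Module.finrank K B - Module.finrank K A by omega)
  rw [← h1] at h3
  have h4 := Finset.card_pos.1 (by exact_mod_cast h3)
  obtain ⟨C, hC⟩ := h4
  exact ⟨C, by simpa using hC⟩

lemma exists_avoid {Q A B : Submodule K W} (h1 : ¬ Q ≤ A) (h2 : ¬ Q ≤ B) :
    ∃ w ∈ Q, w ∉ A ∧ w ∉ B := by
  obtain ⟨a, ha, ha'⟩ := SetLike.not_le_iff_exists.1 h1
  obtain ⟨b, hb, hb'⟩ := SetLike.not_le_iff_exists.1 h2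
  by_cases h3 : a ∈ B
  · by_cases h4 : b ∈ A
    · refine ⟨a + b, Q.add_mem ha hb, ?_, ?_⟩
      · intro h; exact ha' ((A.add_mem_iff_left h4).1 h)
      · intro h; exact hb' ((B.add_mem_iff_right h3).1 h)
    · exact ⟨b, hb, h4, hb'⟩
  · exact ⟨a, ha, ha', h3⟩

/-- All `t`-dimensional subspaces above `R` belong to `N`. -/
def Full (t : ℕ) (N : Finset (Submodule K W)) (R : Submodule K W) : Prop :=
  ∀ T : Submodule K W, Module.finrank K T = t → R ≤ T → T ∈ N

lemma conn {s : ℕ} {N : Finset (Submodule K W)}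
    (hN : ∀ T ∈ N, Module.finrank K T = s + 1)
    (hfull : ∀ G : Submodule K W, Module.finrank K G = s → ∀ T ∈ N, ∀ T' ∈ N, T ≠ T' →
      G ≤ T → G ≤ T' → Full (s + 1) N G)
    {S : Submodule K W} {r : W}
    (hR : ∀ T : Submodule K W, Module.finrank K T = s + 1 → S ≤ T → r ∈ T → T ∈ N)
    (d : ℕ) (T' : Submodule K W) (hT' : T' ∈ N) (hST : S ≤ T') (hrT : r ∉ T')
    (Q : Submodule K W) (hQ : Module.finrank K Q = s + 1) (hSQ : S ≤ Q)
    (hd : s + 1 ≤ Module.finrank K (T' ⊓ Q : Submodule K W) + d) : Q ∈ N := by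
  induction d generalizing T' with
  | zero =>
    have h1 : T' ⊓ Q = Q := Submodule.eq_of_le_of_finrank_le inf_le_right (by omega)
    have h2 : Q ≤ T' := by rw [← h1]; exact inf_le_left
    have h3 : Q = T' := Submodule.eq_of_le_of_finrank_eq h2 (by rw [hQ, hN T' hT'])
    rw [h3]; exact hT'
  | succ d ih =>
    by_cases hrQ : r ∈ Q
    · exact hR Q hQ hSQ hrQ
    have hT'd := hN T' hT'
    by_cases hQT : Q ≤ T'
    · have h3 : Q = T' := Submodule.eq_of_le_of_finrank_eq hQT (by rw [hQ, hT'd])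
      rw [h3]; exact hT'
    have hlt : T' ⊓ Q < T' := by
      refine lt_of_le_of_ne inf_le_left (fun h => hQT ?_)
      have h1 : T' ≤ Q := by rw [← h]; exact inf_le_right
      exact (Submodule.eq_of_le_of_finrank_eq h1 (by rw [hQ, hT'd])).ge
    obtain ⟨G, hG1, hG2, hG3⟩ := exists_hyper (K := K) hlt
    have hGs : Module.finrank K G = s := by omega
    have hSG : S ≤ G := (le_inf hST hSQ).trans hG1
    have hrG : r ∉ G := fun h => hrT (hG2 h)
    have hGr : Module.finrank K (G ⊔ Submodule.span K {r} : Submodule K W) = s + 1 := by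
      rw [finrank_sup_span hrG, hGs]
    have hrr : r ∈ G ⊔ Submodule.span K {r} :=
      Submodule.mem_sup_right (Submodule.mem_span_singleton_self r)
    have hGfull : Full (s + 1) N G := by
      refine hfull G hGs T' hT' (G ⊔ Submodule.span K {r})
        (hR _ hGr (hSG.trans le_sup_left) hrr) ?_ hG2 le_sup_left
      intro h; exact hrT (h ▸ hrr)
    have hQr : ¬ Q ≤ G ⊔ Submodule.span K {r} := by
      intro h
      have := Submodule.eq_of_le_of_finrank_eq h (by rw [hQ, hGr])
      exact hrQ (this ▸ hrr)
    obtain ⟨w, hwQ, hwT, hwr⟩ := exists_avoid hQT hQr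
    have hwG : w ∉ G := fun h => hwT (hG2 h)
    have hGw : Module.finrank K (G ⊔ Submodule.span K {w} : Submodule K W) = s + 1 := by
      rw [finrank_sup_span hwG, hGs]
    have hww : w ∈ G ⊔ Submodule.span K {w} :=
      Submodule.mem_sup_right (Submodule.mem_span_singleton_self w)
    refine ih (G ⊔ Submodule.span K {w}) (hGfull _ hGw le_sup_left) (hSG.trans le_sup_left) ?_ ?_
    · intro h
      have h1 : G ⊔ Submodule.span K {r} ≤ G ⊔ Submodule.span K {w} :=
        sup_le le_sup_left ((Submodule.span_singleton_le_iff_mem _ _).2 h)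
      have h2 := Submodule.eq_of_le_of_finrank_eq h1 (by rw [hGw, hGr])
      exact hwr (h2 ▸ hww)
    · have h1 : T' ⊓ Q < (G ⊔ Submodule.span K {w}) ⊓ Q := by
        refine lt_of_le_of_ne (le_inf (hG1.trans le_sup_left) inf_le_right) (fun h => ?_)
        have : w ∈ T' ⊓ Q := by rw [h]; exact ⟨hww, hwQ⟩
        exact hwT this.1
      have := Submodule.finrank_lt_finrank_of_lt h1
      omega

lemma descend {s : ℕ} {N : Finset (Submodule K W)} (hs : s + 1 < Module.finrank K W)
    (hN : ∀ T ∈ N, Module.finrank K T = s + 1)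
    (hfull : ∀ G : Submodule K W, Module.finrank K G = s → ∀ T ∈ N, ∀ T' ∈ N, T ≠ T' →
      G ≤ T → G ≤ T' → Full (s + 1) N G)
    {R G T : Submodule K W} (hT : Module.finrank K T = s + 1) (hR : Full (s + 1) N R) (hRT : R ≤ T)
    (hG : Full (s + 1) N G) (hGT : G ≤ T) (hGs : Module.finrank K G = s) (hRG : ¬ R ≤ G) :
    Full (s + 1) N (R ⊓ G) := by
  obtain ⟨r, hr, hrG⟩ := SetLike.not_le_iff_exists.1 hRG
  have hRGT : R ⊔ G = T := by
    refine Submodule.eq_of_le_of_finrank_le (sup_le hRT hGT) ?_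
    have h1 : G < R ⊔ G := lt_of_le_of_ne le_sup_right (fun h => hRG (by rw [h]; exact le_sup_left))
    have := Submodule.finrank_lt_finrank_of_lt h1
    omega
  have hd := Submodule.finrank_sup_add_finrank_inf_eq R G
  rw [hRGT] at hd
  have hRr : R ⊓ G ⊔ Submodule.span K {r} = R := by
    refine Submodule.eq_of_le_of_finrank_le
      (sup_le inf_le_left ((Submodule.span_singleton_le_iff_mem _ _).2 hr)) ?_
    rw [finrank_sup_span (fun h : r ∈ R ⊓ G => hrG h.2)]
    omega
  have hTtop : ∃ v : W, v ∉ T := by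
    by_contra! h
    have : T = ⊤ := by rw [eq_top_iff]; intro v _; exact h v
    rw [this, finrank_top] at hT
    omega
  obtain ⟨v, hv⟩ := hTtop
  have hvG : v ∉ G := fun h => hv (hGT h)
  have hGv : Module.finrank K (G ⊔ Submodule.span K {v} : Submodule K W) = s + 1 := by
    rw [finrank_sup_span hvG, hGs]
  have hvv : v ∈ G ⊔ Submodule.span K {v} :=
      Submodule.mem_sup_right (Submodule.mem_span_singleton_self v)
  have hrv : r ∉ G ⊔ Submodule.span K {v} := by
    intro h
    have h1 : T ≤ G ⊔ Submodule.span K {v} := by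
      rw [← hRGT, ← hRr]
      refine sup_le (sup_le (inf_le_right.trans le_sup_left)
        ((Submodule.span_singleton_le_iff_mem _ _).2 h)) le_sup_left
    have h2 := Submodule.eq_of_le_of_finrank_eq h1 (by rw [hGv, hT])
    exact hv (h2 ▸ hvv)
  intro Q hQ hSQ
  refine conn hN hfull (S := R ⊓ G) (r := r) ?_ (s + 1) (G ⊔ Submodule.span K {v})
    (hG _ hGv le_sup_left) (inf_le_right.trans le_sup_left) hrv Q hQ hSQ (by omega)
  intro T1 h1 h2 h3
  refine hR T1 h1 ?_
  rw [← hRr]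
  exact sup_le h2 ((Submodule.span_singleton_le_iff_mem _ _).2 h3)

open Classical in
lemma star_of_full {s : ℕ} {N : Finset (Submodule K W)} (hs1 : 1 ≤ s)
    (hW : Module.finrank K W = 2 * (s + 1))
    (hN : ∀ T ∈ N, Module.finrank K T = s + 1)
    (hinter : ∀ T ∈ N, ∀ T' ∈ N, T ⊓ T' ≠ ⊥)
    (hfull : ∀ G : Submodule K W, Module.finrank K G = s → ∀ T ∈ N, ∀ T' ∈ N, T ≠ T' →
      G ≤ T → G ≤ T' → Full (s + 1) N G)
    {T : Submodule K W} (hT : T ∈ N)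
    (hg : PQ (Fintype.card K) s ≤
      ((Lv K W s).filter (fun G => G ≤ T ∧ Full (s + 1) N G)).card) :
    ∃ E : Submodule K W, Module.finrank K E = 1 ∧
      ∀ T : Submodule K W, T ∈ N ↔ (Module.finrank K T = s + 1 ∧ E ≤ T) := by
  have hq := two_le_card (K := K)
  have hTd := hN T hT
  have hex : ∃ k, ∃ R : Submodule K W, Module.finrank K R = k ∧ R ≤ T ∧ Full (s + 1) N R := by
    refine ⟨_, T, rfl, le_rfl, ?_⟩
    intro T' h1 h2
    have := Submodule.eq_of_le_of_finrank_eq h2 (by rw [h1, hTd])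
    rw [← this]; exact hT
  obtain ⟨R, hRk, hRT, hR⟩ := Nat.find_spec hex
  have hmin : ∀ R' : Submodule K W, R' ≤ T → Full (s + 1) N R' →
      Module.finrank K R ≤ Module.finrank K R' := by
    intro R' h1 h2
    rw [hRk]
    exact Nat.find_min' hex ⟨R', rfl, h1, h2⟩
  have hR1 : Module.finrank K R ≤ 1 := by
    by_contra! hcon
    have hsub : (Lv K W s).filter (fun G => G ≤ T ∧ Full (s + 1) N G) ⊆
        Finset.univ.filter (fun C : Submodule K W => R ≤ C ∧ C ≤ T ∧
          Module.finrank K C + 1 = Module.finrank K T) := by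
      intro G hG
      simp only [Finset.mem_filter, mem_Lv, Finset.mem_univ, true_and] at hG ⊢
      obtain ⟨h1, h2, h3⟩ := hG
      refine ⟨?_, h2, by omega⟩
      by_contra hRG
      have h4 := descend (by omega) hN hfull hTd hR hRT h3 h2 h1 hRG
      have h5 := hmin _ (inf_le_left.trans hRT) h4
      exact hRG (by
        have := Submodule.eq_of_le_of_finrank_le (inf_le_left : R ⊓ G ≤ R) h5
        rw [← this]; exact inf_le_right)
    have h6 := Finset.card_le_card hsub
    have h7 := count_down (K := K) hRT
    have h8 : PQ (Fintype.card K) s ≤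
        PQ (Fintype.card K) (Module.finrank K T - Module.finrank K R) := by
      rw [← h7]
      exact hg.trans (by exact_mod_cast h6)
    have h9 := PQ_lt hq (show Module.finrank K T - Module.finrank K R < s by omega)
    linarith
  obtain ⟨E, hRE, hE⟩ : ∃ E : Submodule K W, R ≤ E ∧ Module.finrank K E = 1 := by
    by_cases h : Module.finrank K R = 1
    · exact ⟨R, le_rfl, h⟩
    · have h0 : Module.finrank K R = 0 := by omega
      have h0' := Submodule.finrank_eq_zero.1 h0
      have : ∃ v : W, v ≠ 0 := by
        haveI : Nontrivial W := Module.nontrivial_of_finrank_pos (R := K) (by omega)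
        exact exists_ne 0
      obtain ⟨v, hv⟩ := this
      exact ⟨Submodule.span K {v}, by rw [h0']; exact bot_le, finrank_span_singleton hv⟩
  refine ⟨E, hE, fun T' => ⟨fun hT' => ⟨hN T' hT', ?_⟩, fun h => hR T' h.1 (hRE.trans h.2)⟩⟩
  by_contra hET
  have hdis : Disjoint E T' := by
    rw [disjoint_iff]
    by_contra hne
    have h1 : Module.finrank K (E ⊓ T' : Submodule K W) ≠ 0 := fun h =>
      hne (Submodule.finrank_eq_zero.1 h)
    have h2 := Submodule.eq_of_le_of_finrank_le (inf_le_left : E ⊓ T' ≤ E) (by omega)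
    exact hET (by rw [← h2]; exact inf_le_right)
  obtain ⟨D, hED, hD⟩ := hdis.exists_isCompl
  have h1 := Submodule.finrank_add_eq_of_isCompl hD
  have h2 := hN T' hT'
  have h3 : D ∈ N := hR D (by omega) (hRE.trans hED)
  exact hinter D h3 T' hT' hD.inf_eq_bot

end star

end Stmt19

namespace Stmt19

section loc
variable {K W : Type*} [Field K] [Fintype K] [AddCommGroup W] [Module K W] [Fintype W]

open Classical in
/-- Number of members of `N` above `G`. -/
noncomputable def ee (N : Finset (Submodule K W)) (G : Submodule K W) : ℚ :=
  ((N.filter (fun T => G ≤ T)).card : ℚ)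

open Classical in
lemma ee_eq_Dn {s : ℕ} {N : Finset (Submodule K W)}
    (hN : ∀ T ∈ N, Module.finrank K T = s + 1) (G : Submodule K W) :
    ee N G = Dn (s + 1) (fun T => if T ∈ N then (1 : ℚ) else 0) G := by
  rw [ee, Dn, Finset.card_filter]
  push_cast
  have hsub : N ⊆ Lv K W (s + 1) := fun T hT => mem_Lv.2 (hN T hT)
  rw [← Finset.sum_subset hsub]
  · refine Finset.sum_congr rfl (fun T hT => ?_)
    simp [hT]
  · intro T _ hT
    simp [hT]

lemma sum_ee {s : ℕ} {N : Finset (Submodule K W)}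
    (hN : ∀ T ∈ N, Module.finrank K T = s + 1) :
    ∑ G ∈ Lv K W s, ee N G = PQ (Fintype.card K) (s + 1) * N.card := by
  classical
  have h := adj (K := K) (W := W) s (s + 1) (fun _ => 1) (fun T => if T ∈ N then (1 : ℚ) else 0)
  simp only [one_mul] at h
  simp_rw [ee_eq_Dn hN]
  rw [← h, Finset.sum_congr rfl (fun H hH => by rw [Up_one s (mem_Lv.1 hH)]), ← Finset.mul_sum]
  congr 1
  have hsub : N ⊆ Lv K W (s + 1) := fun T hT => mem_Lv.2 (hN T hT)
  rw [← Finset.sum_filter, Finset.filter_mem_eq_inter, Finset.inter_eq_right.2 hsub]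
  simp

lemma ee_le {s : ℕ} {N : Finset (Submodule K W)} (hW : Module.finrank K W = 2 * (s + 1))
    (hN : ∀ T ∈ N, Module.finrank K T = s + 1) {G : Submodule K W} (hG : Module.finrank K G = s) :
    ee N G ≤ PQ (Fintype.card K) (s + 2) := by
  classical
  have h := Dn_one (K := K) s hG
  rw [hW, show 2 * (s + 1) - s = s + 2 by omega] at h
  rw [ee_eq_Dn hN, ← h]
  refine Finset.sum_le_sum (fun T _ => ?_)
  by_cases h1 : G ≤ T <;> by_cases h2 : T ∈ N <;> simp [h1, h2]

open Classical in
lemma full_of_ee {s : ℕ} {N : Finset (Submodule K W)} (hW : Module.finrank K W = 2 * (s + 1))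
    (hN : ∀ T ∈ N, Module.finrank K T = s + 1) {G : Submodule K W} (hG : Module.finrank K G = s)
    (h : ee N G = PQ (Fintype.card K) (s + 2)) : Full (s + 1) N G := by
  have h1 := Dn_one (K := K) s hG
  rw [hW, show 2 * (s + 1) - s = s + 2 by omega, ← h, ee, Dn, ← Finset.sum_filter,
    Finset.sum_const, nsmul_eq_mul, mul_one] at h1
  have h2 : ((Lv K W (s + 1)).filter (fun T => G ≤ T)).card ≤ (N.filter (fun T => G ≤ T)).card := by
    exact_mod_cast h1.le
  have h3 : N.filter (fun T => G ≤ T) ⊆ (Lv K W (s + 1)).filter (fun T => G ≤ T) :=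
    Finset.filter_subset_filter _ (fun T hT => mem_Lv.2 (hN T hT))
  have h4 := Finset.eq_of_subset_of_card_le h3 h2
  intro T hT hGT
  have : T ∈ (Lv K W (s + 1)).filter (fun T => G ≤ T) := by
    simp [mem_Lv, hT, hGT]
  rw [← h4] at this
  exact (Finset.mem_filter.1 this).1

lemma ee_of_full {s : ℕ} {N : Finset (Submodule K W)} (hW : Module.finrank K W = 2 * (s + 1))
    (hN : ∀ T ∈ N, Module.finrank K T = s + 1) {G : Submodule K W} (hG : Module.finrank K G = s)
    (h : Full (s + 1) N G) : ee N G = PQ (Fintype.card K) (s + 2) := by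
  classical
  have h1 := Dn_one (K := K) s hG
  rw [hW, show 2 * (s + 1) - s = s + 2 by omega] at h1
  rw [ee_eq_Dn hN, ← h1]
  refine Finset.sum_congr rfl (fun T hT => ?_)
  by_cases h2 : G ≤ T
  · simp [h2, h T (mem_Lv.1 hT) h2]
  · simp [h2]

lemma ekr_Lv {s : ℕ} (hW : Module.finrank K W = 2 * (s + 1))
    {N : Finset (Submodule K W)} (hN : ∀ T ∈ N, Module.finrank K T = s + 1)
    (hinter : ∀ T ∈ N, ∀ T' ∈ N, T ⊓ T' ≠ ⊥) :
    (1 + (Fintype.card K : ℚ) ^ (s + 1)) * (N.card : ℚ) ≤ ((Lv K W (s + 1)).card : ℚ) := by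
  classical
  have h := ekr (by omega) hW N hN hinter
  have h3 : (Finset.univ.filter (fun T : Submodule K W => Module.finrank K T = s + 1)) =
      Lv K W (s + 1) := by
    ext T
    simp [mem_Lv]
  rw [h3] at h
  have h2 : (((Fintype.card K ^ (s + 1) + 1) * N.card : ℕ) : ℚ) ≤ ((Lv K W (s + 1)).card : ℚ) := by
    exact_mod_cast h
  push_cast at h2
  linarith

open Classical in
lemma sum_swap (L N : Finset (Submodule K W)) (p : Submodule K W → Prop) :
    ∑ G ∈ L, (if p G then ee N G else 0) =
      ∑ T ∈ N, ((L.filter (fun G => G ≤ T ∧ p G)).card : ℚ) := by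
  simp only [ee, Finset.card_filter]
  push_cast
  rw [Finset.sum_comm]
  refine Finset.sum_congr rfl (fun G _ => ?_)
  by_cases h : p G
  · simp [h]
  · simp [h]

open Classical in
lemma ee_int {N : Finset (Submodule K W)} (G : Submodule K W) : 0 ≤ ee N G * (ee N G - 1) := by
  unfold ee
  rcases Nat.eq_zero_or_pos (N.filter (fun T => G ≤ T)).card with h | h
  · rw [h]; simp
  · have : (1 : ℚ) ≤ (N.filter (fun T => G ≤ T)).card := by exact_mod_cast h
    apply mul_nonneg <;> linarith

lemma cardX_pos {s : ℕ} (hW : Module.finrank K W = 2 * (s + 1)) :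
    (0 : ℚ) < (Lv K W (s + 1)).card := by
  have h1 : (Lv K W (s + 1)).Nonempty := by
    obtain ⟨S, hS, hSc, -⟩ := exists_spread (K := K) (W := W) (t := s + 1) (by omega) hW
    obtain ⟨U, hU⟩ := Finset.card_pos.1 (by rw [hSc]; omega : 0 < S.card)
    exact ⟨U, mem_Lv.2 (hS U hU)⟩
  exact_mod_cast Finset.card_pos.2 h1

lemma sum_ee_sq {s : ℕ} {N : Finset (Submodule K W)} (hW : Module.finrank K W = 2 * (s + 1))
    (hN : ∀ T ∈ N, Module.finrank K T = s + 1)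
    (hinter : ∀ T ∈ N, ∀ T' ∈ N, T ⊓ T' ≠ ⊥) :
    ∑ G ∈ Lv K W s, ee N G ^ 2 ≤ N.card * (PQ (Fintype.card K) (s + 1) +
      Fintype.card K * PQ (Fintype.card K) (s + 1) * PQ (Fintype.card K) s) := by
  classical
  set q := Fintype.card K with hq
  set X : ℚ := ((Lv K W (s + 1)).card : ℚ) with hX
  have hXpos : 0 < X := cardX_pos hW
  set ν : ℚ := (N.card : ℚ) with hν
  have hsub : N ⊆ Lv K W (s + 1) := fun T hT => mem_Lv.2 (hN T hT)
  have hsum1 : ∑ T ∈ Lv K W (s + 1), (if T ∈ N then (1 : ℚ) else 0) = ν := by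
    rw [← Finset.sum_filter, Finset.filter_mem_eq_inter, Finset.inter_eq_right.2 hsub]
    simp [hν]
  let f : Submodule K W → ℚ := fun T => (if T ∈ N then (1 : ℚ) else 0) - ν / X
  have hf0 : ∑ T ∈ Lv K W (s + 1), f T = 0 := by
    simp only [f, Finset.sum_sub_distrib, hsum1, Finset.sum_const, nsmul_eq_mul, ← hX]
    field_simp
    ring
  have hf2 : ∑ T ∈ Lv K W (s + 1), f T ^ 2 = ν - ν ^ 2 / X := by
    have : ∀ T, f T ^ 2 = (1 - 2 * (ν / X)) * (if T ∈ N then (1 : ℚ) else 0) + (ν / X) ^ 2 := by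
      intro T
      simp only [f]
      split_ifs <;> ring
    simp_rw [this]
    rw [Finset.sum_add_distrib, ← Finset.mul_sum, hsum1, Finset.sum_const, nsmul_eq_mul, ← hX]
    field_simp
    ring
  have hDf : ∀ G ∈ Lv K W s, Dn (s + 1) f G = ee N G - PQ q (s + 2) * (ν / X) := by
    intro G hG
    have h := Dn_one (K := K) s (mem_Lv.1 hG)
    rw [hW, show 2 * (s + 1) - s = s + 2 by omega] at h
    rw [ee_eq_Dn hN, hq, ← h, Dn, Dn, Dn, Finset.sum_mul, ← Finset.sum_sub_distrib]
    refine Finset.sum_congr rfl (fun T _ => ?_)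
    by_cases h1 : G ≤ T <;> simp [h1, f]
  have hb := Dn_bound (K := K) s (by omega) f hf0
  rw [hf2, Finset.sum_congr rfl (fun G hG => by rw [hDf G hG]), hW,
    show 2 * (s + 1) - (s + 1) = s + 1 by omega] at hb
  have hlev := level_rec (K := K) (W := W) s
  rw [hW, show 2 * (s + 1) - s = s + 2 by omega, ← hX, ← hq] at hlev
  have hexp : ∑ G ∈ Lv K W s, (ee N G - PQ q (s + 2) * (ν / X)) ^ 2 =
      ∑ G ∈ Lv K W s, ee N G ^ 2 - PQ q (s + 1) * PQ q (s + 2) * ν ^ 2 / X := by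
    have : ∀ G, (ee N G - PQ q (s + 2) * (ν / X)) ^ 2 = ee N G ^ 2 -
      (2 * PQ q (s + 2) * (ν / X)) * ee N G + (PQ q (s + 2) * (ν / X)) ^ 2 := fun G => by ring
    simp_rw [this]
    rw [Finset.sum_add_distrib, Finset.sum_sub_distrib, ← Finset.mul_sum, sum_ee hN,
      Finset.sum_const, nsmul_eq_mul, ← hq, ← hν]
    have e : ((Lv K W s).card : ℚ) * (PQ q (s + 2) * (ν / X)) ^ 2 =
      X * PQ q (s + 1) * PQ q (s + 2) * (ν / X) ^ 2 := by
      rw [← hlev]; ring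
    rw [e]
    field_simp
    ring
  rw [hexp, ← hq] at hb
  have hekr : ((q : ℚ) ^ (s + 1) + 1) * ν ≤ X := by
    have := ekr_Lv hW hN hinter
    rw [← hq, ← hν, ← hX] at this
    linarith
  have e1 := PQ_succ' q (s + 1)
  have e2 := PQ_succ' q s
  have e3 := PQ_succ q s
  have e4 := PQ_succ q (s + 1)
  have hν0 : 0 ≤ ν := by rw [hν]; positivity
  have hp1 := PQ_nonneg q (s + 1)
  -- P(s+2) - q P(s) = 1 + q^(s+1)
  have e5 : PQ q (s + 2) - q * PQ q s = 1 + (q : ℚ) ^ (s + 1) := by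
    rw [show s + 2 = s + 1 + 1 from rfl, e4, e2]; ring
  have hkey : PQ q (s + 1) * (1 + (q : ℚ) ^ (s + 1)) * (ν ^ 2 / X) ≤ PQ q (s + 1) * ν := by
    have : (1 + (q : ℚ) ^ (s + 1)) * (ν ^ 2 / X) ≤ ν := by
      rw [← mul_div_assoc, div_le_iff₀ hXpos]
      nlinarith
    rw [mul_assoc]
    exact mul_le_mul_of_nonneg_left this hp1
  rw [← e5] at hkey
  have : PQ q (s + 1) * PQ q (s + 2) * ν ^ 2 / X = PQ q (s + 1) * PQ q (s + 2) * (ν ^ 2 / X) := by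
    ring
  rw [this] at hb
  nlinarith

set_option maxHeartbeats 2000000 in
lemma loc_main {s : ℕ} {N : Finset (Submodule K W)} (hs : 1 ≤ s)
    (hW : Module.finrank K W = 2 * (s + 1))
    (hN : ∀ T ∈ N, Module.finrank K T = s + 1)
    (hinter : ∀ T ∈ N, ∀ T' ∈ N, T ⊓ T' ≠ ⊥) {C : ℚ} (hC : PQ (Fintype.card K) (s + 3) ≤ C) :
    (PQ (Fintype.card K) (s + 1) * ((Lv K W (s + 1)).card * (Fintype.card K : ℚ) ^ (s + 1) /
        (1 + (Fintype.card K : ℚ) ^ (s + 1))) / (C - 1) ≤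
      ∑ G ∈ Lv K W s, (PQ (Fintype.card K) (s + 2) - ee N G) / (C - ee N G)) ∧
    (∑ G ∈ Lv K W s, (PQ (Fintype.card K) (s + 2) - ee N G) / (C - ee N G) =
      PQ (Fintype.card K) (s + 1) * ((Lv K W (s + 1)).card * (Fintype.card K : ℚ) ^ (s + 1) /
        (1 + (Fintype.card K : ℚ) ^ (s + 1))) / (C - 1) →
      ∃ E : Submodule K W, Module.finrank K E = 1 ∧
      ∀ T : Submodule K W, T ∈ N ↔ (Module.finrank K T = s + 1 ∧ E ≤ T)) := by
  classical
  have hsq := sum_ee_sq hW hN hinter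
  have hse := sum_ee hN
  have hq2 := two_le_card (K := K)
  have hekr := ekr_Lv hW hN hinter
  have hlev := level_rec (K := K) (W := W) s
  have hXpos := cardX_pos hW
  rw [hW, show 2 * (s + 1) - s = s + 2 by omega] at hlev
  have hle : ∀ G ∈ Lv K W s, ee N G ≤ PQ (Fintype.card K) (s + 2) :=
    fun G hG => ee_le hW hN (mem_Lv.1 hG)
  set q := Fintype.card K with hq
  set X : ℚ := ((Lv K W (s + 1)).card : ℚ) with hX
  set ν : ℚ := (N.card : ℚ) with hν
  set Pt := PQ q (s + 1) with hPt
  set c := PQ q (s + 2) with hc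
  set Q : ℚ := (q : ℚ) ^ (s + 1) with hQ
  have hQ0 : 0 < Q := by positivity
  have hekr' : (1 + Q) * ν ≤ X := hekr
  have hPtpos : 0 < Pt := PQ_pos hq2 (by omega)
  have e2 : Pt = 1 + q * PQ q s := PQ_succ' q s
  have e4 : c = Pt + Q := PQ_succ q (s + 1)
  have e5 : c = 1 + q * Pt := PQ_succ' q (s + 1)
  have e6 : c < C := (PQ_lt hq2 (by omega)).trans_le hC
  have hPs := PQ_pos hq2 hs
  have hq0 : (2 : ℚ) ≤ q := by exact_mod_cast hq2
  have hPt1 : 1 < Pt := by rw [e2]; nlinarith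
  have hC1 : 1 + Q < C := by linarith
  set M := X / (1 + Q) with hM
  have hXM : X = M * (1 + Q) := by
    rw [hM, div_mul_cancel₀ _ (by positivity : (1 + Q) ≠ 0)]
  have hMpos : 0 < M := div_pos hXpos (by positivity)
  have hνM : ν ≤ M := by rw [hM, le_div_iff₀ (by positivity)]; linarith
  set Y := ν * (Pt + q * Pt * PQ q s) - ∑ G ∈ Lv K W s, ee N G ^ 2 with hY
  have hY0 : 0 ≤ Y := by linarith
  let gap : Submodule K W → ℚ := fun G =>
    (c - ee N G) * (ee N G * (ee N G - 1)) / ((C - ee N G) * C)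
  have hgap : ∀ G ∈ Lv K W s, 0 ≤ gap G := by
    intro G hG
    have h1 := hle G hG
    have h2 := ee_int (N := N) G
    have h3 : 0 < C - ee N G := by linarith
    have h4 : 0 < C := by linarith
    have h5 : 0 ≤ c - ee N G := by linarith
    exact div_nonneg (mul_nonneg h5 h2) (by positivity)
  have hCne : C ≠ 0 := by linarith
  have hC1ne : C - 1 ≠ 0 := by linarith
  have hphi : ∀ G ∈ Lv K W s, (c - ee N G) / (C - ee N G) =
      (1 / (C - 1)) * ((c - ee N G) + (c - ee N G) * (ee N G - 1) / C + gap G) := by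
    intro G hG
    have h1 := hle G hG
    have h3 : C - ee N G ≠ 0 := by linarith
    simp only [gap]
    field_simp
    ring
  have htarget : X * Q / (1 + Q) = X - M := by
    rw [hM]; field_simp; ring
  have hid : ∑ G ∈ Lv K W s, (c - ee N G) / (C - ee N G) =
      Pt * (X - M) / (C - 1) + (1 / (C - 1)) * (Pt * (M - ν) * (1 - (1 + Q) / C) + Y / C +
        ∑ G ∈ Lv K W s, gap G) := by
    rw [Finset.sum_congr rfl hphi, ← Finset.mul_sum, Finset.sum_add_distrib]
    have h1 : ∑ G ∈ Lv K W s, ((c - ee N G) + (c - ee N G) * (ee N G - 1) / C) =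
      (Lv K W s).card * c * (1 - 1 / C) + ((c + 1) / C - 1) * (∑ G ∈ Lv K W s, ee N G) -
        (∑ G ∈ Lv K W s, ee N G ^ 2) / C := by
      rw [Finset.mul_sum, Finset.sum_div]
      have : ((Lv K W s).card : ℚ) * c * (1 - 1 / C) = ∑ G ∈ Lv K W s, c * (1 - 1 / C) := by
        rw [Finset.sum_const, nsmul_eq_mul]; ring
      rw [this, ← Finset.sum_add_distrib, ← Finset.sum_sub_distrib]
      refine Finset.sum_congr rfl (fun G _ => ?_)
      field_simp
      ring
    have h2 : ∑ G ∈ Lv K W s, ee N G ^ 2 = ν * (Pt + q * Pt * PQ q s) - Y := by rw [hY]; ring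
    rw [h1, h2, hlev, hse, hXM]
    have h3 : q * PQ q s = Pt - 1 := by linarith
    have h4 : q * Pt * PQ q s = Pt * (Pt - 1) := by rw [← h3]; ring
    rw [h4, e4]
    field_simp
    ring
  rw [htarget]
  have hinv : 0 < 1 / (C - 1) := by
    have : 0 < C - 1 := by linarith
    positivity
  have ht0 : 0 < 1 - (1 + Q) / C := by
    rw [sub_pos, div_lt_one (by linarith)]; exact hC1
  have hA : 0 ≤ Pt * (M - ν) * (1 - (1 + Q) / C) :=
    mul_nonneg (mul_nonneg hPtpos.le (by linarith)) ht0.le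
  have hB : 0 ≤ Y / C := div_nonneg hY0 (by linarith)
  have hD : 0 ≤ ∑ G ∈ Lv K W s, gap G := Finset.sum_nonneg hgap
  refine ⟨?_, ?_⟩
  · rw [hid]
    have := mul_nonneg hinv.le (add_nonneg (add_nonneg hA hB) hD)
    linarith
  · intro heq
    rw [hid] at heq
    have h0 : Pt * (M - ν) * (1 - (1 + Q) / C) + Y / C + ∑ G ∈ Lv K W s, gap G = 0 := by
      have : (1 / (C - 1)) * (Pt * (M - ν) * (1 - (1 + Q) / C) + Y / C +
        ∑ G ∈ Lv K W s, gap G) = 0 := by linarith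
      exact (mul_eq_zero.1 this).resolve_left hinv.ne'
    have hA0 : Pt * (M - ν) * (1 - (1 + Q) / C) = 0 := by linarith
    have hB0 : Y / C = 0 := by linarith
    have hD0 : ∑ G ∈ Lv K W s, gap G = 0 := by linarith
    have hYz : Y = 0 := by
      rcases div_eq_zero_iff.1 hB0 with h | h
      · exact h
      · exact absurd h hCne
    have hνpos : 0 < ν := by
      have h1 := (mul_eq_zero.1 hA0).resolve_right ht0.ne'
      have h2 := (mul_eq_zero.1 h1).resolve_left hPtpos.ne'
      linarith
    have hgap0 := (Finset.sum_eq_zero_iff_of_nonneg hgap).1 hD0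
    have hcase : ∀ G ∈ Lv K W s, ee N G = c ∨ ee N G * (ee N G - 1) = 0 := by
      intro G hG
      have h1 := hgap0 G hG
      have h2 := hle G hG
      have h3 : C - ee N G ≠ 0 := by linarith
      rcases div_eq_zero_iff.1 h1 with h | h
      · rcases mul_eq_zero.1 h with h | h
        · left; linarith
        · right; exact h
      · rcases mul_eq_zero.1 h with h | h
        · exact absurd h h3
        · exact absurd h hCne
    have hfull : ∀ G : Submodule K W, Module.finrank K G = s → ∀ T ∈ N, ∀ T' ∈ N, T ≠ T' →
      G ≤ T → G ≤ T' → Full (s + 1) N G := by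
      intro G hG T hT T' hT' hne h1 h2
      apply full_of_ee hW hN hG
      rcases hcase G (mem_Lv.2 hG) with h | h
      · exact h
      · exfalso
        have h3 : 1 < (N.filter (fun T => G ≤ T)).card :=
          Finset.one_lt_card.2 ⟨T, by simp [hT, h1], T', by simp [hT', h2], hne⟩
        have h4 : (1 : ℚ) < ee N G := by unfold ee; exact_mod_cast h3
        nlinarith
    -- counting
    have hcount : ∀ G ∈ Lv K W s, ee N G * (ee N G - 1) =
        (q * Pt) * (if Full (s + 1) N G then ee N G else 0) := by
      intro G hG
      split_ifs with h
      · have := ee_of_full hW hN (mem_Lv.1 hG) h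
        rw [this]
        rw [← hq, ← hc, e5]; ring
      · rcases hcase G hG with h1 | h1
        · exact absurd (full_of_ee hW hN (mem_Lv.1 hG) h1) h
        · rw [h1, mul_zero]
    have hsumfull : ∑ G ∈ Lv K W s, (if Full (s + 1) N G then ee N G else 0) = ν * PQ q s := by
      have h1 : ∑ G ∈ Lv K W s, ee N G * (ee N G - 1) = (q * Pt) * (ν * PQ q s) := by
        have : ∀ G, ee N G * (ee N G - 1) = ee N G ^ 2 - ee N G := fun G => by ring
        simp_rw [this]
        rw [Finset.sum_sub_distrib, hse]
        linear_combination -hYz + hY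
      rw [Finset.sum_congr rfl hcount, ← Finset.mul_sum] at h1
      exact mul_left_cancel₀ (by positivity) h1
    have hswap : ∑ G ∈ Lv K W s, (if Full (s + 1) N G then ee N G else 0) =
        ∑ T ∈ N, (((Lv K W s).filter (fun G => G ≤ T ∧ Full (s + 1) N G)).card : ℚ) := by
      convert sum_swap (Lv K W s) N (Full (s + 1) N)
    have hexT : ∃ T ∈ N, PQ q s ≤
        (((Lv K W s).filter (fun G => G ≤ T ∧ Full (s + 1) N G)).card : ℚ) := by
      apply Finset.exists_le_of_sum_le
      · rw [← Finset.card_pos]; rw [hν] at hνpos; exact_mod_cast hνpos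
      · rw [← hswap, hsumfull, Finset.sum_const, nsmul_eq_mul]
    obtain ⟨T, hT, hg⟩ := hexT
    exact star_of_full hs hW hN hinter hfull hT hg

end loc

end Stmt19

namespace Stmt19

section gauss

lemma gauss_rec {q : ℕ} (hq : 2 ≤ q) (m k : ℕ) :
    GaussQ q m (k + 1) * PQ q (k + 1) = GaussQ q m k * PQ q (m - k) := by
  have hq1 : (1 : ℚ) < q := by exact_mod_cast (by omega : 1 < q)
  have hden : ∀ j : ℕ, (q : ℚ) ^ (j + 1) - 1 ≠ 0 := fun j => by
    have := one_lt_pow₀ hq1 (Nat.succ_ne_zero j)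
    exact (sub_pos.2 this).ne'
  have hform : ∀ k : ℕ, GaussQ q m k =
      ∏ i ∈ Finset.range k, ((q : ℚ) ^ (m - i) - 1) / ((q : ℚ) ^ (i + 1) - 1) := by
    intro k
    rw [GaussQ, Finset.prod_div_distrib, Finset.prod_div_distrib]
    congr 1
    rw [← Finset.prod_range_reflect]
    refine Finset.prod_congr rfl (fun i hi => ?_)
    have := Finset.mem_range.1 hi
    rw [show k - (k - 1 - i) = i + 1 by omega]
  have h1 := PQ_mul q (k + 1)
  have h2 := PQ_mul q (m - k)
  rw [hform, hform, Finset.prod_range_succ]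
  have hq0 : (q : ℚ) - 1 ≠ 0 := (sub_pos.2 hq1).ne'
  apply mul_right_cancel₀ hq0
  rw [mul_assoc, h1, mul_assoc (Finset.prod _ _) (PQ q (m - k)), h2, mul_assoc,
    div_mul_cancel₀ _ (hden k)]

lemma gauss_zero (q m : ℕ) : GaussQ q m 0 = 1 := by simp [GaussQ]

lemma gauss_up {q : ℕ} (hq : 2 ≤ q) (m k : ℕ) :
    GaussQ q (m + 1) k * PQ q (m + 1 - k) = PQ q (m + 1) * GaussQ q m k := by
  induction k with
  | zero => simp [gauss_zero]
  | succ k ih =>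
    have h1 := gauss_rec hq (m + 1) k
    have h2 := gauss_rec hq m k
    have hp : PQ q (k + 1) ≠ 0 := (PQ_pos hq (by omega)).ne'
    apply mul_right_cancel₀ hp
    rw [show m + 1 - (k + 1) = m - k by omega]
    linear_combination PQ q (m - k) * h1 + PQ q (m - k) * ih - PQ q (m + 1) * h2

lemma gauss_half {q : ℕ} (hq : 2 ≤ q) {t : ℕ} (ht : 1 ≤ t) :
    GaussQ q (2 * t) t = (1 + (q : ℚ) ^ t) * GaussQ q (2 * t - 1) t := by
  have h := gauss_up hq (2 * t - 1) t
  rw [show 2 * t - 1 + 1 = 2 * t by omega, show 2 * t - t = t by omega] at h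
  have hp : PQ q t ≠ 0 := (PQ_pos hq (by omega)).ne'
  have hq1 : (1 : ℚ) < q := by exact_mod_cast (by omega : 1 < q)
  have hq0 : (q : ℚ) - 1 ≠ 0 := (sub_pos.2 hq1).ne'
  have h2 : PQ q (2 * t) = PQ q t * (1 + (q : ℚ) ^ t) := by
    apply mul_right_cancel₀ hq0
    have e1 := PQ_mul q t
    have e2 := PQ_mul q (2 * t)
    rw [e2]
    rw [show 2 * t = t + t by omega, pow_add]
    linear_combination -(1 + (q : ℚ) ^ t) * e1
  apply mul_right_cancel₀ hp
  rw [h, h2]; ring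

lemma gauss_pos {q : ℕ} (hq : 2 ≤ q) {m k : ℕ} (h : k ≤ m) : 0 < GaussQ q m k := by
  induction k with
  | zero => simp [gauss_zero]
  | succ k ih =>
    have h1 := gauss_rec hq m k
    have h2 := PQ_pos hq (m := k + 1) (by omega)
    have h3 := PQ_pos hq (m := m - k) (by omega)
    have h4 := mul_pos (ih (by omega)) h3
    rw [← h1] at h4
    exact pos_of_mul_pos_left h4 h2.le

lemma card_Lv {K W : Type*} [Field K] [Fintype K] [AddCommGroup W] [Module K W] [Fintype W]
    (i : ℕ) : ((Lv K W i).card : ℚ) = GaussQ (Fintype.card K) (Module.finrank K W) i := by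
  have hq := two_le_card (K := K)
  induction i with
  | zero =>
    rw [gauss_zero]
    have : Lv K W 0 = {⊥} := by
      ext T
      simp [mem_Lv]
    rw [this]; simp
  | succ i ih =>
    have h1 := level_rec (K := K) (W := W) i
    have h2 := gauss_rec hq (Module.finrank K W) i
    have hp : PQ (Fintype.card K) (i + 1) ≠ 0 := (PQ_pos hq (by omega)).ne'
    apply mul_right_cancel₀ hp
    rw [← h1, h2, ih]

end gauss

section transfer
variable {K V : Type*} [Field K] [Fintype K] [AddCommGroup V] [Module K V] [Fintype V]

open Classical in
lemma loc_V {s : ℕ} {B : Submodule K V} {N : Finset (Submodule K V)} (hs : 1 ≤ s)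
    (hB : Module.finrank K B = 2 * (s + 1))
    (hN : ∀ T ∈ N, T ≤ B ∧ Module.finrank K T = s + 1)
    (hinter : ∀ T ∈ N, ∀ T' ∈ N, T ⊓ T' ≠ ⊥) {C : ℚ} (hC : PQ (Fintype.card K) (s + 3) ≤ C) :
    (PQ (Fintype.card K) (s + 1) * (GaussQ (Fintype.card K) (2 * (s + 1) - 1) (s + 1) *
        (Fintype.card K : ℚ) ^ (s + 1)) / (C - 1) ≤
      ∑ G ∈ (Lv K V s).filter (fun G => G ≤ B),
        (PQ (Fintype.card K) (s + 2) - ee N G) / (C - ee N G)) ∧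
    (∑ G ∈ (Lv K V s).filter (fun G => G ≤ B),
        (PQ (Fintype.card K) (s + 2) - ee N G) / (C - ee N G) =
      PQ (Fintype.card K) (s + 1) * (GaussQ (Fintype.card K) (2 * (s + 1) - 1) (s + 1) *
        (Fintype.card K : ℚ) ^ (s + 1)) / (C - 1) →
      ∃ E : Submodule K V, E ≤ B ∧ Module.finrank K E = 1 ∧
      ∀ T : Submodule K V, T ∈ N ↔ (T ≤ B ∧ Module.finrank K T = s + 1 ∧ E ≤ T)) := by
  have hinj : Function.Injective (Submodule.map B.subtype) :=
    Submodule.map_injective_of_injective B.injective_subtype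
  have hmc : ∀ T : Submodule K V, T ≤ B → (T.comap B.subtype).map B.subtype = T := fun T hT => by
    rw [Submodule.map_comap_subtype, inf_eq_right.2 hT]
  have hfr : ∀ T : Submodule K B, Module.finrank K (T.map B.subtype) = Module.finrank K T :=
    fun T => Submodule.finrank_map_subtype_eq B T
  have hle : ∀ S T : Submodule K B, S.map B.subtype ≤ T.map B.subtype ↔ S ≤ T := fun S T =>
    Submodule.map_le_map_iff_of_injective B.injective_subtype S T
  let N' : Finset (Submodule K B) := Finset.univ.filter (fun T => T.map B.subtype ∈ N)
  have hN'm : ∀ T, T ∈ N' ↔ T.map B.subtype ∈ N := fun T => by simp [N']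
  have hN' : ∀ T ∈ N', Module.finrank K T = s + 1 := fun T hT => by
    rw [← hfr]; exact (hN _ ((hN'm T).1 hT)).2
  have hinter' : ∀ T ∈ N', ∀ T' ∈ N', T ⊓ T' ≠ ⊥ := by
    intro T hT T' hT' h
    refine hinter _ ((hN'm T).1 hT) _ ((hN'm T').1 hT') ?_
    rw [← Submodule.map_inf _ B.injective_subtype, h, Submodule.map_bot]
  have hee : ∀ G : Submodule K B, ee N' G = ee N (G.map B.subtype) := by
    intro G
    unfold ee
    congr 1
    refine Finset.card_bij (fun T _ => T.map B.subtype) ?_ ?_ ?_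
    · intro T hT
      simp only [Finset.mem_filter] at hT ⊢
      exact ⟨(hN'm T).1 hT.1, (hle _ _).2 hT.2⟩
    · intro T _ T' _ h
      exact hinj h
    · intro T hT
      simp only [Finset.mem_filter] at hT
      have hTB := (hN T hT.1).1
      refine ⟨T.comap B.subtype, ?_, hmc T hTB⟩
      simp only [Finset.mem_filter]
      refine ⟨(hN'm _).2 (by rw [hmc T hTB]; exact hT.1), ?_⟩
      rw [← hle, hmc T hTB]; exact hT.2
  have hsum : ∑ G ∈ Lv K B s, (PQ (Fintype.card K) (s + 2) - ee N' G) / (C - ee N' G) =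
      ∑ G ∈ (Lv K V s).filter (fun G => G ≤ B),
        (PQ (Fintype.card K) (s + 2) - ee N G) / (C - ee N G) := by
    refine Finset.sum_bij (fun T _ => T.map B.subtype) ?_ ?_ ?_ ?_
    · intro T hT
      simp only [Finset.mem_filter, mem_Lv] at hT ⊢
      exact ⟨by rw [hfr]; exact hT, Submodule.map_subtype_le B T⟩
    · intro T _ T' _ h
      exact hinj h
    · intro T hT
      simp only [Finset.mem_filter, mem_Lv] at hT
      refine ⟨T.comap B.subtype, ?_, hmc T hT.2⟩
      rw [mem_Lv, ← hfr, hmc T hT.2]; exact hT.1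
    · intro T _
      rw [hee]
  have hq := two_le_card (K := K)
  have hmain := loc_main hs hB hN' hinter' hC
  have hX : ((Lv K B (s + 1)).card : ℚ) * (Fintype.card K : ℚ) ^ (s + 1) /
        (1 + (Fintype.card K : ℚ) ^ (s + 1)) =
      GaussQ (Fintype.card K) (2 * (s + 1) - 1) (s + 1) * (Fintype.card K : ℚ) ^ (s + 1) := by
    rw [card_Lv, hB, gauss_half hq (by omega)]
    have : (1 + (Fintype.card K : ℚ) ^ (s + 1)) ≠ 0 := by positivity
    field_simp
  rw [hX, hsum] at hmain
  refine ⟨hmain.1, fun h => ?_⟩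
  obtain ⟨E, hE1, hE⟩ := hmain.2 h
  refine ⟨E.map B.subtype, Submodule.map_subtype_le B E, by rw [hfr]; exact hE1, ?_⟩
  intro T
  constructor
  · intro hT
    obtain ⟨h1, h2⟩ := hN T hT
    refine ⟨h1, h2, ?_⟩
    rw [← hmc T h1, hle]
    refine ((hE _).1 ((hN'm _).2 ?_)).2
    rw [hmc T h1]; exact hT
  · rintro ⟨h1, h2, h3⟩
    rw [← hmc T h1, ← hN'm, hE]
    refine ⟨by rw [← hfr, hmc T h1]; exact h2, ?_⟩
    rw [← hle, hmc T h1]; exact h3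

end transfer

section global
variable {K V : Type*} [Field K] [Fintype K] [AddCommGroup V] [Module K V] [Fintype V]

open Classical in
/-- The number of members of the family above `T`. -/
noncomputable def cnt (F : Finset (Submodule K V)) (T : Submodule K V) : ℕ :=
  (F.filter (fun B => T ≤ B)).card

open Classical in
/-- Subspaces of `B` of dimension `t` lying in several members. -/
noncomputable def NN (F : Finset (Submodule K V)) (t : ℕ) (B : Submodule K V) :
    Finset (Submodule K V) :=
  (Lv K V t).filter (fun T => T ≤ B ∧ 1 < cnt F T)

open Classical in
/-- The finset version of Omega. -/
noncomputable def Om (F : Finset (Submodule K V)) (t : ℕ) : Finset (Submodule K V) :=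
  (Lv K V t).filter (fun T => cnt F T = 1)

open Classical in
lemma dd_eq {F : Finset (Submodule K V)} {s : ℕ} {B G : Submodule K V} (hB : B ∈ F)
    (hdB : Module.finrank K B = 2 * (s + 1)) (hG : Module.finrank K G = s) (hGB : G ≤ B) :
    (((Om F (s + 1)).filter (fun A => G ≤ A ∧ A ≤ B)).card : ℚ) =
      PQ (Fintype.card K) (s + 2) - ee (NN F (s + 1) B) G := by
  have h := count_up hGB
  rw [hdB, hG, show 2 * (s + 1) - s = s + 2 by omega] at h
  rw [← h, eq_sub_iff_add_eq]
  unfold ee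
  rw [← Nat.cast_add, ← Finset.card_union_of_disjoint]
  · congr 2
    ext A
    simp only [Om, NN, Finset.mem_union, Finset.mem_filter, mem_Lv, Finset.mem_univ, true_and]
    have hpos : A ≤ B → 1 ≤ cnt F A := fun hA => by
      unfold cnt
      exact Finset.card_pos.2 ⟨B, by simp [hB, hA]⟩
    constructor
    · rintro (⟨⟨h1, h2⟩, h3, h4⟩ | ⟨⟨h1, h2, h3⟩, h4⟩)
      · exact ⟨h3, h4, h1⟩
      · exact ⟨h4, h2, h1⟩
    · rintro ⟨h1, h2, h3⟩
      have := hpos h2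
      by_cases h4 : cnt F A = 1
      · exact Or.inl ⟨⟨h3, h4⟩, h1, h2⟩
      · exact Or.inr ⟨⟨h3, h2, by omega⟩, h1⟩
  · rw [Finset.disjoint_left]
    intro A h1 h2
    simp only [Om, NN, Finset.mem_filter] at h1 h2
    omega

open Classical in
lemma DD_le (F : Finset (Submodule K V)) {s : ℕ} (B : Submodule K V) {G : Submodule K V}
    (hG : Module.finrank K G = s) :
    (((Om F (s + 1)).filter (fun A => G ≤ A)).card : ℚ) + ee (NN F (s + 1) B) G ≤
      PQ (Fintype.card K) (Module.finrank K V - s) := by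
  have h := count_up (K := K) (A := G) (B := ⊤) le_top
  rw [hG, finrank_top] at h
  rw [← h]
  unfold ee
  rw [← Nat.cast_add, ← Finset.card_union_of_disjoint]
  · rw [Nat.cast_le]
    refine Finset.card_le_card ?_
    intro A
    simp only [Om, NN, Finset.mem_union, Finset.mem_filter, mem_Lv, Finset.mem_univ, true_and]
    rintro (⟨⟨h1, h2⟩, h3⟩ | ⟨⟨h1, h2, h3⟩, h4⟩)
    · exact ⟨h3, le_top, h1⟩
    · exact ⟨h4, le_top, h1⟩
  · rw [Finset.disjoint_left]
    intro A h1 h2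
    simp only [Om, NN, Finset.mem_filter] at h1 h2
    omega

open Classical in
lemma DD_sum (F : Finset (Submodule K V)) (s : ℕ) (G : Submodule K V) :
    (((Om F (s + 1)).filter (fun A => G ≤ A)).card : ℚ) =
      ∑ B ∈ F.filter (fun B => G ≤ B),
        (((Om F (s + 1)).filter (fun A => G ≤ A ∧ A ≤ B)).card : ℚ) := by
  norm_cast
  have e1 : ∀ B, ((Om F (s + 1)).filter (fun A => G ≤ A ∧ A ≤ B)).card =
      ∑ A ∈ (Om F (s + 1)).filter (fun A => G ≤ A), if A ≤ B then 1 else 0 := by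
    intro B
    rw [← Finset.card_filter, Finset.filter_filter]
  simp_rw [e1]
  rw [Finset.sum_comm, Finset.card_eq_sum_ones]
  refine Finset.sum_congr rfl (fun A hA => ?_)
  simp only [Finset.mem_filter, Om] at hA
  rw [← Finset.card_filter, Finset.filter_filter, ← hA.1.2]
  unfold cnt
  congr 1
  ext B
  simp only [Finset.mem_filter]
  exact ⟨fun h => ⟨h.1, hA.2.trans h.2, h.2⟩, fun h => ⟨h.1, h.2.2⟩⟩

open Classical in
lemma shadow_pt {F : Finset (Submodule K V)} {s : ℕ}
    (hdim : ∀ B ∈ F, Module.finrank K B = 2 * (s + 1)) {G : Submodule K V}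
    (hG : Module.finrank K G = s) :
    ∑ B ∈ F.filter (fun B => G ≤ B),
      (PQ (Fintype.card K) (s + 2) - ee (NN F (s + 1) B) G) /
        (PQ (Fintype.card K) (Module.finrank K V - s) - ee (NN F (s + 1) B) G) ≤
      if ∃ A ∈ Om F (s + 1), G ≤ A then 1 else 0 := by
  set D : ℚ := (((Om F (s + 1)).filter (fun A => G ≤ A)).card : ℚ) with hD
  have hsum := DD_sum F s G
  rw [← hD] at hsum
  have hdd : ∀ B ∈ F.filter (fun B => G ≤ B),
      (((Om F (s + 1)).filter (fun A => G ≤ A ∧ A ≤ B)).card : ℚ) =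
      PQ (Fintype.card K) (s + 2) - ee (NN F (s + 1) B) G := fun B hB => by
    rw [Finset.mem_filter] at hB
    exact dd_eq hB.1 (hdim B hB.1) hG hB.2
  rw [Finset.sum_congr rfl hdd] at hsum
  have hnn : ∀ B ∈ F.filter (fun B => G ≤ B),
      0 ≤ PQ (Fintype.card K) (s + 2) - ee (NN F (s + 1) B) G := fun B hB => by
    rw [← hdd B hB]; positivity
  have hD0 : 0 ≤ D := by rw [hD]; positivity
  split_ifs with h
  · obtain ⟨A, hA, hGA⟩ := h
    have hDpos : 0 < D := by
      rw [hD, Nat.cast_pos]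
      exact Finset.card_pos.2 ⟨A, by simp [hA, hGA]⟩
    calc _ ≤ ∑ B ∈ F.filter (fun B => G ≤ B),
          (PQ (Fintype.card K) (s + 2) - ee (NN F (s + 1) B) G) / D := by
          refine Finset.sum_le_sum (fun B hB => ?_)
          have := DD_le F (s := s) B hG
          exact div_le_div_of_nonneg_left (hnn B hB) hDpos (by linarith)
      _ = 1 := by rw [← Finset.sum_div, ← hsum, div_self hDpos.ne']
  · have hDz : D = 0 := by
      rw [hD, Nat.cast_eq_zero, Finset.card_eq_zero, Finset.filter_eq_empty_iff]
      intro A hA hGA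
      exact h ⟨A, hA, hGA⟩
    rw [hDz] at hsum
    have hz := (Finset.sum_eq_zero_iff_of_nonneg hnn).1 hsum.symm
    refine (Finset.sum_eq_zero (fun B hB => ?_)).le
    rw [hz B hB, zero_div]

open Classical in
lemma shadow_sum {F : Finset (Submodule K V)} {s : ℕ}
    (hdim : ∀ B ∈ F, Module.finrank K B = 2 * (s + 1)) :
    ∑ B ∈ F, ∑ G ∈ (Lv K V s).filter (fun G => G ≤ B),
      (PQ (Fintype.card K) (s + 2) - ee (NN F (s + 1) B) G) /
        (PQ (Fintype.card K) (Module.finrank K V - s) - ee (NN F (s + 1) B) G) ≤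
      (((Lv K V s).filter (fun G => ∃ A ∈ Om F (s + 1), G ≤ A)).card : ℚ) := by
  rw [Finset.card_filter]
  push_cast
  calc _ = ∑ G ∈ Lv K V s, ∑ B ∈ F.filter (fun B => G ≤ B),
      (PQ (Fintype.card K) (s + 2) - ee (NN F (s + 1) B) G) /
        (PQ (Fintype.card K) (Module.finrank K V - s) - ee (NN F (s + 1) B) G) := by
        simp_rw [Finset.sum_filter]
        rw [Finset.sum_comm]
    _ ≤ _ := by
        refine Finset.sum_le_sum (fun G hG => ?_)
        refine (shadow_pt hdim (mem_Lv.1 hG)).trans (le_of_eq ?_)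
        congr

lemma NN_int {F : Finset (Submodule K V)} {t : ℕ}
    (hdim : ∀ B ∈ F, Module.finrank K B = 2 * t)
    (hcf : IsCoverFree (F : Set (Submodule K V))) {B : Submodule K V} (hB : B ∈ F) :
    ∀ T ∈ NN F t B, ∀ T' ∈ NN F t B, T ⊓ T' ≠ ⊥ := by
  classical
  intro T hT T' hT' hbot
  simp only [NN, Finset.mem_filter, mem_Lv] at hT hT'
  obtain ⟨h1, h2, h3⟩ := hT
  obtain ⟨h1', h2', h3'⟩ := hT'
  have hsup : T ⊔ T' = B := by
    apply Submodule.eq_of_le_of_finrank_eq (sup_le h2 h2')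
    have := Submodule.finrank_sup_add_finrank_inf_eq T T'
    rw [hbot, finrank_bot, h1, h1'] at this
    rw [hdim B hB]; omega
  obtain ⟨B1, hB1, hne1⟩ := Finset.exists_mem_ne h3 B
  obtain ⟨B2, hB2, hne2⟩ := Finset.exists_mem_ne h3' B
  rw [Finset.mem_filter] at hB1 hB2
  refine hcf ⟨B, B1, B2, hB, hB1.1, hB2.1, hne1.symm, hne2.symm, ?_, ?_⟩
  · rintro rfl
    apply hne1
    symm
    apply Submodule.eq_of_le_of_finrank_eq
    · rw [← hsup]; exact sup_le hB1.2 hB2.2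
    · rw [hdim B hB, hdim B1 hB1.1]
  · calc B = T ⊔ T' := hsup.symm
      _ ≤ _ := sup_le_sup (le_inf h2 hB1.2) (le_inf h2' hB2.2)

open Classical in
lemma main_fin {F : Finset (Submodule K V)} {s : ℕ} (hs : 1 ≤ s)
    (hn : 2 * (s + 1) + 1 ≤ Module.finrank K V)
    (hdim : ∀ B ∈ F, Module.finrank K B = 2 * (s + 1))
    (hcf : IsCoverFree (F : Set (Submodule K V)))
    (hcard : (F.card : ℚ) = GaussQ (Fintype.card K) (Module.finrank K V - 1) (s + 1) /
      GaussQ (Fintype.card K) (2 * (s + 1) - 1) (s + 1)) :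
    (Fintype.card K : ℚ) ^ s * GaussQ (Fintype.card K) (Module.finrank K V - 1) s ≤
      (((Lv K V s).filter (fun G => ∃ A ∈ Om F (s + 1), G ≤ A)).card : ℚ) ∧
    ((((Lv K V s).filter (fun G => ∃ A ∈ Om F (s + 1), G ≤ A)).card : ℚ) =
      (Fintype.card K : ℚ) ^ s * GaussQ (Fintype.card K) (Module.finrank K V - 1) s →
      ∀ B ∈ F, ∃ E : Submodule K V, E ≤ B ∧ Module.finrank K E = 1 ∧
        ∀ T : Submodule K V, T ∈ NN F (s + 1) B ↔
          (T ≤ B ∧ Module.finrank K T = s + 1 ∧ E ≤ T)) := by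
  have hq := two_le_card (K := K)
  have hsh := shadow_sum hdim
  have hloc := fun B (hB : B ∈ F) => loc_V (B := B) (N := NN F (s + 1) B) hs (hdim B hB)
    (fun T hT => by
      simp only [NN, Finset.mem_filter, mem_Lv] at hT
      exact ⟨hT.2.1, hT.1⟩) (NN_int hdim hcf hB)
    (C := PQ (Fintype.card K) (Module.finrank K V - s)) (PQ_le hq (by omega))
  set n := Module.finrank K V with hndef
  set q := Fintype.card K with hqdef
  set b : ℚ := PQ q (s + 1) * (GaussQ q (2 * (s + 1) - 1) (s + 1) * (q : ℚ) ^ (s + 1)) /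
    (PQ q (n - s) - 1) with hb
  have hbsum : ∑ B ∈ F, b = (q : ℚ) ^ s * GaussQ q (n - 1) s := by
    rw [Finset.sum_const, nsmul_eq_mul, hcard, hb]
    have hG := (gauss_pos hq (m := 2 * (s + 1) - 1) (k := s + 1) (by omega)).ne'
    have hr := gauss_rec hq (n - 1) s
    rw [show n - 1 - s = n - s - 1 by omega] at hr
    have hC : PQ q (n - s) = 1 + q * PQ q (n - s - 1) := by
      rw [← PQ_succ', show n - s - 1 + 1 = n - s by omega]
    have hP := (PQ_pos hq (m := n - s - 1) (by omega)).ne'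
    have hq0 : (q : ℚ) ≠ 0 := by
      have : q ≠ 0 := by omega
      exact_mod_cast this
    rw [hC, add_sub_cancel_left]
    rw [div_mul_div_comm, div_eq_iff (mul_ne_zero hG (mul_ne_zero hq0 hP))]
    rw [pow_succ]
    linear_combination (GaussQ q (2 * (s + 1) - 1) (s + 1) * (q : ℚ) ^ s * q) * hr
  refine ⟨?_, fun heq B hB => ?_⟩
  · rw [← hbsum]
    exact (Finset.sum_le_sum (fun B hB => (hloc B hB).1)).trans hsh
  · refine (hloc B hB).2 ?_
    rw [heq, ← hbsum] at hsh
    have hle := Finset.sum_le_sum (fun B hB => (hloc B hB).1)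
    exact ((Finset.sum_eq_sum_iff_of_le (fun B hB => (hloc B hB).1)).1
      (le_antisymm hle hsh) B hB).symm

end global

end Stmt19

theorem stmt19 (q n t : ℕ) (K : Type*) [Field K] [Fintype K] (hK : Fintype.card K = q)
    (V : Type*) [AddCommGroup V] [Module K V] [FiniteDimensional K V]
    (hV : Module.finrank K V = n) (ht : 2 ≤ t) (hn : 2 * t + 1 ≤ n)
    (F : Set (Submodule K V)) (hdim : ∀ A ∈ F, Module.finrank K A = 2 * t)
    (hcf : IsCoverFree F)
    (hcard : (F.ncard : ℚ) = GaussQ q (n - 1) t / GaussQ q (2 * t - 1) t) :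
    (q : ℚ) ^ (t - 1) * GaussQ q (n - 1) (t - 1) ≤
      (((ShadowSet t (OmegaSet F t)).ncard : ℚ)) ∧
    ((((ShadowSet t (OmegaSet F t)).ncard : ℚ)) =
        (q : ℚ) ^ (t - 1) * GaussQ q (n - 1) (t - 1) →
      ∀ F₀ ∈ F, ∃ E : Submodule K V, E ≤ F₀ ∧ Module.finrank K E = 1 ∧
        {T : Submodule K V | T ≤ F₀ ∧ Module.finrank K T = t ∧ 1 < {G ∈ F | T ≤ G}.ncard} =
          {H : Submodule K V | H ≤ F₀ ∧ Module.finrank K H = t ∧ E ≤ H}) := by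
  classical
  subst hK
  subst hV
  obtain ⟨s, rfl⟩ : ∃ s, t = s + 1 := ⟨t - 1, by omega⟩
  haveI : Fintype V := Module.fintypeOfFintype (Module.finBasis K V)
  have hfin : F.Finite := Set.toFinite F
  obtain ⟨F', rfl⟩ : ∃ F' : Finset (Submodule K V), F = (F' : Set (Submodule K V)) :=
    ⟨hfin.toFinset, by simp⟩
  have hcnt : ∀ T : Submodule K V,
      {G ∈ (F' : Set (Submodule K V)) | T ≤ G}.ncard = Stmt19.cnt F' T := by
    intro T
    rw [Stmt19.cnt, ← Set.ncard_coe_finset]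
    congr 1
    ext G
    simp
  rw [Set.ncard_coe_finset] at hcard
  have hmain := Stmt19.main_fin (K := K) (V := V) (F := F') (s := s) (by omega) hn
    (fun B hB => hdim B hB) hcf hcard
  have hSh : (ShadowSet (s + 1) (OmegaSet (F' : Set (Submodule K V)) (s + 1))).ncard =
      ((Stmt19.Lv K V s).filter (fun G => ∃ A ∈ Stmt19.Om F' (s + 1), G ≤ A)).card := by
    rw [← Set.ncard_coe_finset]
    congr 1
    ext G
    simp only [ShadowSet, OmegaSet, hcnt, Stmt19.Om, Set.mem_ofPred_eq, Finset.coe_filter,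
      Finset.mem_filter, Stmt19.mem_Lv, Nat.add_sub_cancel]
  rw [hSh, Nat.add_sub_cancel]
  refine ⟨hmain.1, fun heq F₀ hF₀ => ?_⟩
  obtain ⟨E, h1, h2, h3⟩ := hmain.2 heq F₀ hF₀
  refine ⟨E, h1, h2, ?_⟩
  ext T
  simp only [Set.mem_ofPred_eq, hcnt]
  rw [← h3 T]
  simp only [Stmt19.NN, Finset.mem_filter, Stmt19.mem_Lv]
  tauto
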